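/- Assume the Extended Riemann Hypothesis. Let D : ℕ → ℕ and a : ℕ → ℕ be sequences with D_n ≥ 1, gcd(a_n, D_n) = 1 for all n, and D_n·(log n)^2/√n → 0 as n → ∞. Then for all sufficiently large n there exists a prime p with p ≡ a_n (mod D_n) and n/2 ≤ p ≤ n. -/

import Mathlib

/-- The Extended Riemann Hypothesis: every zero of every Dirichlet `L`-function
in the critical strip lies on the critical line. -/
def ExtendedRiemannHypothesis : Prop :=
  ∀ (N : ℕ) [NeZero N] (χ : DirichletCharacter ℂ N) (s : ℂ),
    0 < s.re → s.re < 1 → DirichletCharacter.LFunction χ s = 0 → s.re = 1 / 2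

/-!
Fix a smooth weight `f` on `[δ, 1]` and a character `χ` mod `N`. Moving the Mellin inversion
integral of `L'/L(χ, s)` times the Mellin transform of `f` from `re s = 2` to
`re s = 1/2 + 1/log n` shows that `∑ χ(m) Λ(m) f(m/n)` is `n ∫ f` for principal `χ` and `0`
otherwise, up to `O(√n log n log N)`. Orthogonality of characters, together with `ψ - θ = O(√n)` to
discard the prime powers, then produces a prime in the class once `N log² n = o(√n)`.

For the integral of `L'/L` at distance `η` from the zeros, divide `L` by a polynomial majorant, so
that `u = -log ‖L‖` is nonnegative and harmonic. Borel–Carathéodory on discs of radius `η` gives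
`‖L'/L‖ ≤ 6 u / η` up to `O(1)`, and the Poisson average of `u` along a vertical line is at most its
value at a single point to the right, which is `O(log N)`.
-/

namespace DirichletBertrand

open Complex Set Filter Topology MeasureTheory Metric InnerProductSpace

/-- The circle of radius `r` centred at `σ + r`, parametrised by the arc length `t` from its
leftmost point `σ`; as `r → ∞` it becomes the vertical line through `σ`. -/
noncomputable def tangentCircle (σ r t : ℝ) : ℂ := circleMap (σ + r) r (Real.pi - t / r)

lemma continuous_tangentCircle (σ r : ℝ) : Continuous (tangentCircle σ r) := by
  unfold tangentCircle
  fun_prop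

lemma closedBall_ofReal_add_subset (σ r : ℝ) :
    closedBall (σ + r : ℂ) r ⊆ {z | σ ≤ z.re} := fun z hz => by
  have := (abs_le.1 ((abs_re_le_norm _).trans (mem_closedBall_iff_norm.1 hz))).1
  simp only [sub_re, add_re, ofReal_re] at this
  exact (by linarith : σ ≤ z.re)

lemma le_re_tangentCircle (σ : ℝ) {r : ℝ} (hr : 0 ≤ r) (t : ℝ) : σ ≤ (tangentCircle σ r t).re :=
  closedBall_ofReal_add_subset σ r (circleMap_mem_closedBall _ hr _)

lemma tendsto_tangentCircle (σ t : ℝ) :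
    Tendsto (fun r => tangentCircle σ r t) atTop (𝓝 (σ + t * I)) := by
  have hderiv : HasDerivAt (fun x : ℝ => cexp (-(t * I) * x)) (-(t * I)) 0 := by
    simpa using ((hasDerivAt_id (0 : ℂ)).const_mul (-(t * I))).cexp.comp_ofReal
  have hslope := (hderiv.tendsto_slope_zero_right.comp tendsto_inv_atTop_nhdsGT_zero).const_sub
    (σ : ℂ)
  rw [sub_neg_eq_add] at hslope
  refine hslope.congr fun r => ?_
  have harg : ((Real.pi - t / r : ℝ) : ℂ) * I = Real.pi * I + -(t * I) * ((r⁻¹ : ℝ) : ℂ) := by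
    push_cast; ring
  simp only [Function.comp_apply, tangentCircle, circleMap, harg, Complex.exp_add, exp_pi_mul_I,
    zero_add, ofReal_zero, mul_zero, Complex.exp_zero, inv_inv, real_smul]
  ring

/-- The Poisson kernel of the disc bounded by `tangentCircle σ r` at the point `σ + d`, normalised
for integration over the arc length. -/
noncomputable def tangentKernel (σ d r t : ℝ) : ℝ :=
  poissonKernel (σ + r) (σ + d) (tangentCircle σ r t) / r

lemma tendsto_tangentKernel (σ t : ℝ) {d : ℝ} (hd : d ≠ 0) :
    Tendsto (fun r => tangentKernel σ d r t) atTop (𝓝 (2 * d / (d ^ 2 + t ^ 2))) := by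
  have hnum : Tendsto (fun r : ℝ => 2 * d - d ^ 2 * r⁻¹) atTop (𝓝 (2 * d)) := by
    simpa using (tendsto_inv_atTop_zero.const_mul (d ^ 2)).const_sub (2 * d)
  have hden := ((tendsto_tangentCircle σ t).sub_const (σ + d : ℂ)).norm.pow 2
  have hlim : ‖(σ + t * I : ℂ) - (σ + d)‖ ^ 2 = d ^ 2 + t ^ 2 := by
    rw [← normSq_eq_norm_sq, normSq_apply]
    simp
    ring
  rw [hlim] at hden
  refine (hnum.div hden (by positivity)).congr' ?_
  filter_upwards [eventually_ne_atTop 0] with r hr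
  have hw : ‖(σ + d : ℂ) - (σ + r)‖ ^ 2 = (d - r) ^ 2 := by
    rw [add_sub_add_left_eq_sub, ← ofReal_sub, norm_real, Real.norm_eq_abs, sq_abs]
  have hz : ‖tangentCircle σ r t - (σ + r)‖ ^ 2 = r ^ 2 := by
    rw [tangentCircle, circleMap_sub_center, norm_circleMap_zero, sq_abs]
  rw [Pi.div_apply, tangentKernel, poissonKernel, hw, hz, sub_sub_sub_cancel_right, div_right_comm]
  congr 1
  field_simp
  ring

section Disc

variable {σ d r : ℝ} (hd : 0 < d) (hr : d < 2 * r)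
include hd hr

lemma ofReal_add_mem_ball : (σ + d : ℂ) ∈ ball (σ + r : ℂ) r := by
  rw [mem_ball_iff_norm, add_sub_add_left_eq_sub, ← ofReal_sub, norm_real, Real.norm_eq_abs, abs_lt]
  constructor <;> linarith

lemma continuous_tangentKernel : Continuous (tangentKernel σ d r) := by
  have hne (t : ℝ) : ‖tangentCircle σ r t - (σ + r) - (σ + d - (σ + r) : ℂ)‖ ^ 2 ≠ 0 := by
    rw [sub_sub_sub_cancel_right]
    exact pow_ne_zero 2 (norm_ne_zero_iff.2 (sub_ne_zero.2
      (circleMap_ne_mem_ball (ofReal_add_mem_ball hd hr) _)))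
  have := continuous_tangentCircle σ r
  unfold tangentKernel poissonKernel
  fun_prop (disch := exact hne _)

lemma tangentKernel_nonneg (t : ℝ) : 0 ≤ tangentKernel σ d r t := by
  have hw := ofReal_add_mem_ball (σ := σ) hd hr
  rw [mem_ball_iff_norm] at hw
  rw [tangentKernel, poissonKernel, tangentCircle, circleMap_sub_center, norm_circleMap_zero,
    sq_abs]
  have := pow_le_pow_left₀ (norm_nonneg _) hw.le 2
  exact div_nonneg (div_nonneg (sub_nonneg.2 this) (sq_nonneg _)) (by linarith)

lemma integral_tangentKernel_mul {v : ℂ → ℝ} (hv : HarmonicOnNhd v {z | σ ≤ z.re}) :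
    ∫ t in (-(Real.pi * r))..(Real.pi * r), tangentKernel σ d r t * v (tangentCircle σ r t) =
      2 * Real.pi * v (σ + d) := by
  have hr0 : r ≠ 0 := by linarith
  have hpoisson := (hv.mono (closedBall_ofReal_add_subset σ r)).circleAverage_poissonKernel_smul
    (ofReal_add_mem_ball hd hr)
  have hchange := intervalIntegral.integral_comp_sub_div (a := -(Real.pi * r)) (b := Real.pi * r)
    (fun θ => (poissonKernel (σ + r : ℂ) (σ + d) • v) (circleMap (σ + r) r θ)) hr0 Real.pi
  rw [neg_div, mul_div_cancel_right₀ _ hr0, sub_self, sub_neg_eq_add, ← two_mul,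
    smul_eq_mul] at hchange
  rw [Real.circleAverage_def, smul_eq_mul, inv_mul_eq_iff_eq_mul₀ Real.two_pi_pos.ne'] at hpoisson
  simp only [tangentKernel, div_mul_eq_mul_div, intervalIntegral.integral_div]
  rw [div_eq_iff hr0, ← hpoisson]
  exact hchange.trans (mul_comm _ _)

lemma lintegral_tangentKernel_mul {v : ℂ → ℝ} (hv : HarmonicOnNhd v {z | σ ≤ z.re})
    (hnonneg : ∀ z : ℂ, σ ≤ z.re → 0 ≤ v z) :
    ∫⁻ t in Ioc (-(Real.pi * r)) (Real.pi * r),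
      ENNReal.ofReal (tangentKernel σ d r t * v (tangentCircle σ r t)) =
        ENNReal.ofReal (2 * Real.pi * v (σ + d)) := by
  have hr0 : 0 ≤ r := by linarith
  have hcont : Continuous fun t => tangentKernel σ d r t * v (tangentCircle σ r t) :=
    (continuous_tangentKernel hd hr).mul
      (hv.continuousOn.comp_continuous (continuous_tangentCircle σ r) (le_re_tangentCircle σ hr0))
  rw [← ofReal_integral_eq_lintegral_ofReal hcont.integrableOn_Ioc (ae_of_all _ fun t =>
      mul_nonneg (tangentKernel_nonneg hd hr t) (hnonneg _ (le_re_tangentCircle σ hr0 t))),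
    ← intervalIntegral.integral_of_le (neg_le_self (by positivity)),
    integral_tangentKernel_mul hd hr hv]

end Disc

section HalfPlane

variable {v : ℂ → ℝ} {σ d : ℝ} (hd : 0 < d) (hv : HarmonicOnNhd v {z | σ ≤ z.re})
  (hnonneg : ∀ z : ℂ, σ ≤ z.re → 0 ≤ v z)
include hd hv hnonneg

lemma lintegral_poisson_mul_le :
    ∫⁻ t : ℝ, ENNReal.ofReal (2 * d / (d ^ 2 + t ^ 2) * v (σ + t * I)) ≤
      ENNReal.ofReal (2 * Real.pi * v (σ + d)) := by
  let g (n : ℕ) : ℝ → ENNReal := (Ioc (-(Real.pi * n)) (Real.pi * n)).indicator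
    fun t => ENNReal.ofReal (tangentKernel σ d n t * v (tangentCircle σ n t))
  have hg_meas (n : ℕ) : Measurable (g n) := by
    have hv_meas := (hv.continuousOn.comp_continuous (continuous_tangentCircle σ n)
      (le_re_tangentCircle σ n.cast_nonneg)).measurable
    have hz_meas := (continuous_tangentCircle σ n).measurable
    have hk_meas : Measurable (tangentKernel σ d n) := by
      unfold tangentKernel poissonKernel
      fun_prop
    exact (hk_meas.mul hv_meas).ennreal_ofReal.indicator measurableSet_Ioc
  have hg_tendsto (t : ℝ) : Tendsto (fun n => g n t) atTop
      (𝓝 (ENNReal.ofReal (2 * d / (d ^ 2 + t ^ 2) * v (σ + t * I)))) := by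
    have hv_lim := (hv (σ + t * I) (by simp)).1.continuousAt.tendsto.comp
      (tendsto_tangentCircle σ t)
    refine ((ENNReal.tendsto_ofReal ((tendsto_tangentKernel σ t hd.ne').mul hv_lim)).comp
      tendsto_natCast_atTop_atTop).congr' ?_
    filter_upwards [(tendsto_natCast_atTop_atTop.const_mul_atTop
      Real.pi_pos).eventually_gt_atTop |t|] with n hn
    have ht : t ∈ Ioc (-(Real.pi * n)) (Real.pi * n) := ⟨(abs_lt.1 hn).1, (abs_lt.1 hn).2.le⟩
    simp only [g, indicator_of_mem ht]
    rfl
  have hg_integral : ∀ᶠ n in atTop, ∫⁻ t, g n t = ENNReal.ofReal (2 * Real.pi * v (σ + d)) := by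
    filter_upwards [(tendsto_natCast_atTop_atTop.const_mul_atTop
      two_pos).eventually_gt_atTop d] with n hn
    rw [lintegral_indicator measurableSet_Ioc]
    exact lintegral_tangentKernel_mul hd hn hv hnonneg
  calc ∫⁻ t : ℝ, ENNReal.ofReal (2 * d / (d ^ 2 + t ^ 2) * v (σ + t * I))
      = ∫⁻ t : ℝ, liminf (fun n => g n t) atTop :=
        lintegral_congr fun t => (hg_tendsto t).liminf_eq.symm
    _ ≤ liminf (fun n => ∫⁻ t, g n t) atTop := lintegral_liminf_le hg_meas
    _ = ENNReal.ofReal (2 * Real.pi * v (σ + d)) :=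
        (tendsto_const_nhds.congr' (hg_integral.mono fun n hn => hn.symm)).liminf_eq

lemma integrable_poisson_mul :
    Integrable fun t : ℝ => 2 * d / (d ^ 2 + t ^ 2) * v (σ + t * I) := by
  have hcont : Continuous fun t : ℝ => v (σ + t * I) :=
    hv.continuousOn.comp_continuous (by fun_prop) (by simp)
  have hkernel : Measurable fun t : ℝ => 2 * d / (d ^ 2 + t ^ 2) := by fun_prop
  refine ⟨(hkernel.mul hcont.measurable).aestronglyMeasurable, ?_⟩
  rw [hasFiniteIntegral_iff_ofReal (ae_of_all _ fun t =>
    mul_nonneg (by positivity) (hnonneg _ (by simp)))]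
  exact (lintegral_poisson_mul_le hd hv hnonneg).trans_lt ENNReal.ofReal_lt_top

theorem integral_poisson_mul_le :
    ∫ t : ℝ, 2 * d / (d ^ 2 + t ^ 2) * v (σ + t * I) ≤ 2 * Real.pi * v (σ + d) := by
  rw [integral_eq_lintegral_of_nonneg_ae
    (ae_of_all _ fun t => mul_nonneg (by positivity) (hnonneg _ (by simp)))
    (integrable_poisson_mul hd hv hnonneg).aestronglyMeasurable]
  exact ENNReal.toReal_le_of_le_ofReal
    (mul_nonneg Real.two_pi_pos.le (hnonneg _ (by simpa using hd.le)))
    (lintegral_poisson_mul_le hd hv hnonneg)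

end HalfPlane

lemma exists_log_on_ball {F : ℂ → ℂ} {c : ℂ} {R : ℝ} (hR : 0 < R)
    (hF : DifferentiableOn ℂ F (ball c R)) (h0 : ∀ z ∈ ball c R, F z ≠ 0) :
    ∃ h : ℂ → ℂ, h c = Real.log ‖F c‖ ∧
      ∀ z ∈ ball c R, HasDerivAt h (logDeriv F z) z ∧ (h z).re = Real.log ‖F z‖ := by
  have hc : c ∈ ball c R := mem_ball_self hR
  have hlogDeriv : DifferentiableOn ℂ (logDeriv F) (ball c R) :=
    (hF.deriv isOpen_ball).div hF h0
  obtain ⟨h, hhc, hh⟩ := hlogDeriv.isExactOn_ball.with_val_at c (Real.log ‖F c‖ : ℂ)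
  refine ⟨h, hhc, fun z hz => ⟨hh z hz, ?_⟩⟩
  have hderiv : ∀ z ∈ ball c R, HasDerivAt (fun z => F z * cexp (-h z)) 0 z := fun z hz => by
    convert! (hF.differentiableAt (isOpen_ball.mem_nhds hz)).hasDerivAt.mul
      (hh z hz).neg.cexp using 1
    rw [logDeriv_apply]
    field_simp [h0 z hz]
    ring
  have hconst : F z * cexp (-h z) = F c * cexp (-h c) :=
    isOpen_ball.is_const_of_deriv_eq_zero (convex_ball c R).isPreconnected
      (fun w hw => (hderiv w hw).differentiableAt.differentiableWithinAt)
      (fun w hw => (hderiv w hw).deriv) hz hc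
  have hnorm := congrArg norm hconst
  rw [norm_mul, norm_mul, norm_exp, norm_exp, hhc, neg_re, neg_re, ofReal_re, Real.exp_neg,
    Real.exp_neg, Real.exp_log (norm_pos_iff.2 (h0 c hc)),
    mul_inv_cancel₀ (norm_pos_iff.2 (h0 c hc)).ne', ← div_eq_mul_inv,
    div_eq_one_iff_eq (Real.exp_pos _).ne'] at hnorm
  rw [hnorm, Real.log_exp]

lemma norm_le_of_re_nonpos {c : ℂ} {R : ℝ} {h : ℂ → ℂ}
    (hd : DifferentiableOn ℂ h (ball c R)) (hre : ∀ z ∈ ball c R, (h z).re ≤ 0)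
    {z : ℂ} (hz : z ∈ ball c R) :
    ‖h z‖ ≤ ‖h c‖ * ((R + ‖z - c‖) / (R - ‖z - c‖)) := by
  have hmaps : ∀ w ∈ ball (0 : ℂ) R, c + w ∈ ball c R := fun w hw => by
    simpa [dist_eq_norm] using hw
  have hborel : ∀ᶠ M : ℝ in 𝓝[>] 0,
      ‖h z‖ ≤ 2 * M * ‖z - c‖ / (R - ‖z - c‖) + ‖h c‖ * (R + ‖z - c‖) / (R - ‖z - c‖) := by
    filter_upwards [self_mem_nhdsWithin] with M hM
    simpa using borelCaratheodory (f := fun w => h (c + w)) (z := z - c) (R := R) hM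
      (hd.comp (by fun_prop) hmaps) (fun w hw => (hre _ (hmaps w hw)).trans (le_of_lt hM))
      (pos_of_mem_ball hz) (by simpa [dist_eq_norm] using hz)
  have hlim : Tendsto (fun M : ℝ => 2 * M * ‖z - c‖ / (R - ‖z - c‖)
      + ‖h c‖ * (R + ‖z - c‖) / (R - ‖z - c‖)) (𝓝[>] 0)
      (𝓝 (2 * 0 * ‖z - c‖ / (R - ‖z - c‖) + ‖h c‖ * (R + ‖z - c‖) / (R - ‖z - c‖))) :=
    (Continuous.tendsto (by fun_prop) 0).mono_left nhdsWithin_le_nhds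
  simpa [mul_div_assoc] using ge_of_tendsto hlim hborel

section NormLeOne

variable {F : ℂ → ℂ} {c : ℂ} {R : ℝ} (hF : DifferentiableOn ℂ F (ball c R))
  (h0 : ∀ z ∈ ball c R, F z ≠ 0) (h1 : ∀ z ∈ ball c R, ‖F z‖ ≤ 1)
include hF h0 h1

lemma exists_log_norm_le_on_ball (hR : 0 < R) :
    ∃ h : ℂ → ℂ, ∀ z ∈ ball c R, HasDerivAt h (logDeriv F z) z ∧ (h z).re = Real.log ‖F z‖ ∧
      ‖h z‖ ≤ -Real.log ‖F c‖ * ((R + ‖z - c‖) / (R - ‖z - c‖)) := by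
  obtain ⟨h, hc, hh⟩ := exists_log_on_ball hR hF h0
  have hlog : ∀ z ∈ ball c R, Real.log ‖F z‖ ≤ 0 := fun z hz =>
    Real.log_nonpos (norm_nonneg _) (h1 z hz)
  refine ⟨h, fun z hz => ⟨(hh z hz).1, (hh z hz).2, ?_⟩⟩
  have hle := norm_le_of_re_nonpos
    (fun z hz => (hh z hz).1.differentiableAt.differentiableWithinAt)
    (fun z hz => (hh z hz).2.trans_le (hlog z hz)) hz
  rwa [hc, norm_real, Real.norm_of_nonpos (hlog c (mem_ball_self hR))] at hle

lemma neg_log_norm_le_of_norm_le_one {z : ℂ} (hz : z ∈ ball c R) :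
    -Real.log ‖F z‖ ≤ -Real.log ‖F c‖ * ((R + ‖z - c‖) / (R - ‖z - c‖)) := by
  obtain ⟨h, hh⟩ := exists_log_norm_le_on_ball hF h0 h1 (pos_of_mem_ball hz)
  obtain ⟨-, hre, hle⟩ := hh z hz
  rw [← hre]
  exact ((neg_le_abs _).trans (abs_re_le_norm _)).trans hle

lemma norm_logDeriv_le_of_norm_le_one (hR : 0 < R) :
    ‖logDeriv F c‖ ≤ 6 * (-Real.log ‖F c‖) / R := by
  obtain ⟨h, hh⟩ := exists_log_norm_le_on_ball hF h0 h1 hR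
  have hsub : closedBall c (R / 2) ⊆ ball c R := closedBall_subset_ball (half_lt_self hR)
  have hsphere : ∀ z ∈ sphere c (R / 2), ‖h z‖ ≤ 3 * (-Real.log ‖F c‖) := fun z hz => by
    have hle := (hh z (hsub (sphere_subset_closedBall hz))).2.2
    have hratio : (R + R / 2) / (R - R / 2) = 3 := by field_simp; norm_num
    rwa [mem_sphere_iff_norm.1 hz, hratio, mul_comm] at hle
  have hdiff : DifferentiableOn ℂ h (ball c R) :=
    fun z hz => (hh z hz).1.differentiableAt.differentiableWithinAt
  have hcauchy := norm_deriv_le_of_forall_mem_sphere_norm_le (half_pos hR)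
    (hdiff.diffContOnCl_ball hsub) hsphere
  rw [(hh c (mem_ball_self hR)).1.deriv] at hcauchy
  exact hcauchy.trans_eq (by field_simp; ring)

end NormLeOne

lemma ball_subset_re {c : ℂ} {α R : ℝ} (h : α + R ≤ c.re) : ball c R ⊆ {z | α < z.re} :=
  fun z hz => by
    have hre := (abs_lt.1 ((abs_re_le_norm (z - c)).trans_lt (mem_ball_iff_norm.1 hz))).1
    rw [sub_re] at hre
    exact (by linarith : α < z.re)

/-- `IsZeroFree F α K` says that `F` is holomorphic without zeros on `α < re s`, grows there at most
quadratically with constant `K`, and is bounded below on `2 ≤ re s`. These are the properties of an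
`L`-function that its explicit formula uses. -/
structure IsZeroFree (F : ℂ → ℂ) (α K : ℝ) : Prop where
  one_le : 1 ≤ K
  differentiableAt : ∀ s : ℂ, α < s.re → DifferentiableAt ℂ F s
  ne_zero : ∀ s : ℂ, α < s.re → F s ≠ 0
  norm_le : ∀ s : ℂ, α < s.re → ‖F s‖ ≤ K * ‖s + 1‖ ^ 2
  le_norm : ∀ s : ℂ, 2 ≤ s.re → 1 / 3 ≤ ‖F s‖

/-- `F` divided by its majorant `K (s + 1) ^ 2`. -/
noncomputable def normalize (F : ℂ → ℂ) (K : ℝ) (s : ℂ) : ℂ := F s / (K * (s + 1) ^ 2)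

lemma one_le_norm_add_one {s : ℂ} (hs : 0 ≤ s.re) : 1 ≤ ‖s + 1‖ :=
  le_trans (by simpa using hs) (re_le_norm _)

namespace IsZeroFree

variable {F : ℂ → ℂ} {α K : ℝ} (hF : IsZeroFree F α K)
include hF

lemma differentiableAt_logDeriv {s : ℂ} (hs : α < s.re) :
    DifferentiableAt ℂ (logDeriv F) s := by
  have hopen : IsOpen {s : ℂ | α < s.re} := isOpen_lt continuous_const continuous_re
  have hF' : DifferentiableOn ℂ F {s : ℂ | α < s.re} := fun z hz =>
    (hF.differentiableAt z hz).differentiableWithinAt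
  exact ((hF'.deriv hopen).differentiableAt (hopen.mem_nhds hs)).div (hF.differentiableAt s hs)
    (hF.ne_zero s hs)

lemma norm_normalize (s : ℂ) : ‖normalize F K s‖ = ‖F s‖ / (K * ‖s + 1‖ ^ 2) := by
  rw [normalize, norm_div, norm_mul, norm_pow, norm_real,
    Real.norm_of_nonneg (zero_le_one.trans hF.one_le)]

lemma norm_normalize_le_one {s : ℂ} (hs : α < s.re) : ‖normalize F K s‖ ≤ 1 := by
  have := hF.one_le
  rw [hF.norm_normalize]
  exact div_le_one_of_le₀ (hF.norm_le s hs) (by positivity)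

lemma neg_log_norm_normalize_nonneg {s : ℂ} (hs : α < s.re) :
    0 ≤ -Real.log ‖normalize F K s‖ :=
  neg_nonneg.2 (Real.log_nonpos (norm_nonneg _) (hF.norm_normalize_le_one hs))

lemma neg_log_norm_normalize_le {s : ℂ} (hs : 2 ≤ s.re) :
    -Real.log ‖normalize F K s‖ ≤ Real.log K + Real.log (3 * ‖s + 1‖ ^ 2) := by
  have hK := hF.one_le
  have hnorm : 0 < ‖s + 1‖ := zero_lt_one.trans_le (one_le_norm_add_one (by linarith))
  have hlow := hF.le_norm s hs
  rw [← Real.log_inv, hF.norm_normalize, inv_div, ← Real.log_mul (by linarith) (by positivity)]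
  refine Real.log_le_log (by positivity) ?_
  rw [div_le_iff₀ (by linarith)]
  nlinarith [show 0 ≤ K * ‖s + 1‖ ^ 2 by positivity]

lemma neg_log_norm_normalize_add_two_le {σ : ℝ} (h0 : 0 ≤ σ) (h2 : σ ≤ 2) :
    -Real.log ‖normalize F K (σ + 2)‖ ≤ Real.log K + 74 := by
  refine (hF.neg_log_norm_normalize_le (by simpa using h0)).trans ?_
  have hnorm : ‖(σ + 2 : ℂ) + 1‖ = σ + 3 := by
    rw [add_assoc, ← ofReal_ofNat, ← ofReal_one, ← ofReal_add, ← ofReal_add, norm_real,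
      Real.norm_of_nonneg (by linarith)]
    ring
  rw [hnorm]
  have := Real.log_le_sub_one_of_pos (x := 3 * (σ + 3) ^ 2) (by positivity)
  nlinarith

variable (hα : 0 ≤ α)
include hα

lemma majorant_ne_zero {s : ℂ} (hs : α < s.re) : (K * (s + 1) ^ 2 : ℂ) ≠ 0 :=
  mul_ne_zero (ofReal_ne_zero.2 (zero_lt_one.trans_le hF.one_le).ne') (pow_ne_zero 2
    (norm_pos_iff.1 (zero_lt_one.trans_le (one_le_norm_add_one (hα.trans hs.le)))))

lemma differentiableAt_normalize {s : ℂ} (hs : α < s.re) :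
    DifferentiableAt ℂ (normalize F K) s :=
  (hF.differentiableAt s hs).div (by fun_prop) (hF.majorant_ne_zero hα hs)

lemma normalize_ne_zero {s : ℂ} (hs : α < s.re) : normalize F K s ≠ 0 :=
  div_ne_zero (hF.ne_zero s hs) (hF.majorant_ne_zero hα hs)

lemma logDeriv_eq_normalize {s : ℂ} (hs : α < s.re) :
    logDeriv F s = logDeriv (normalize F K) s + 2 / (s + 1) := by
  have hK : (K : ℂ) ≠ 0 := left_ne_zero_of_mul (hF.majorant_ne_zero hα hs)
  have hlog : logDeriv (normalize F K) s = _ :=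
    logDeriv_div s (hF.ne_zero s hs) (hF.majorant_ne_zero hα hs) (hF.differentiableAt s hs)
      (by fun_prop)
  rw [hlog, logDeriv_const_mul _ _ hK, logDeriv_fun_pow (by fun_prop), logDeriv_apply (· + 1)]
  simp [div_eq_mul_inv]

lemma norm_logDeriv_le {η : ℝ} (hη : 0 < η) {s : ℂ} (hs : α + η ≤ s.re) :
    ‖logDeriv F s‖ ≤ 6 / η * (-Real.log ‖normalize F K s‖) + 2 := by
  have hball := ball_subset_re hs
  have hle := norm_logDeriv_le_of_norm_le_one
    (fun z hz => (hF.differentiableAt_normalize hα (hball hz)).differentiableWithinAt)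
    (fun z hz => hF.normalize_ne_zero hα (hball hz))
    (fun z hz => hF.norm_normalize_le_one (hball hz)) hη
  have hone := one_le_norm_add_one (s := s) (by linarith)
  rw [hF.logDeriv_eq_normalize hα (by linarith)]
  refine (norm_add_le _ _).trans (add_le_add (hle.trans_eq (by ring)) ?_)
  rw [norm_div, div_le_iff₀ (by linarith), norm_ofNat]
  linarith

lemma neg_log_norm_normalize_strip_le {σ : ℝ} (hασ : α < σ) (hσ : σ ≤ 2) (t : ℝ) :
    -Real.log ‖normalize F K (σ + t * I)‖ ≤ 108 * K / (σ - α) * (1 + t ^ 2) := by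
  have hK := hF.one_le
  have hball : ball (2 + t * I : ℂ) (2 - α) ⊆ {z | α < z.re} := ball_subset_re (by simp)
  have hdist : ‖(σ + t * I : ℂ) - (2 + t * I)‖ = 2 - σ := by
    rw [add_sub_add_right_eq_sub, norm_sub_rev, ← ofReal_ofNat, ← ofReal_sub, norm_real,
      Real.norm_of_nonneg (by linarith)]
  have hharnack := neg_log_norm_le_of_norm_le_one
    (fun z hz => (hF.differentiableAt_normalize hα (hball hz)).differentiableWithinAt)
    (fun z hz => hF.normalize_ne_zero hα (hball hz))
    (fun z hz => hF.norm_normalize_le_one (hball hz))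
    (z := σ + t * I) (by rw [mem_ball_iff_norm, hdist]; linarith)
  have hcentre := hF.neg_log_norm_normalize_le (s := 2 + t * I) (by simp)
  have hnorm : ‖(2 + t * I : ℂ) + 1‖ ^ 2 = 9 + t ^ 2 := by
    rw [← normSq_eq_norm_sq, normSq_apply]
    simp
    ring
  rw [hnorm, ← Real.log_mul (by linarith) (by positivity)] at hcentre
  have hlog := Real.log_le_sub_one_of_pos (x := K * (3 * (9 + t ^ 2))) (by positivity)
  have hσα : 0 < σ - α := by linarith
  calc _ ≤ _ := hharnack
    _ ≤ 27 * K * (1 + t ^ 2) * (4 / (σ - α)) := by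
        rw [hdist, show 2 - α - (2 - σ) = σ - α by ring]
        have : 0 ≤ 2 - α + (2 - σ) := by linarith
        gcongr
        · nlinarith [sq_nonneg t]
        · linarith
    _ = _ := by ring

lemma norm_logDeriv_strip_le {η σ : ℝ} (hη : 0 < η) (hσ : α + η ≤ σ) (hσ2 : σ ≤ 2) (t : ℝ) :
    ‖logDeriv F (σ + t * I)‖ ≤ (648 * K / η ^ 2 + 2) * (1 + t ^ 2) := by
  have hK := hF.one_le
  have hstrip := hF.neg_log_norm_normalize_strip_le hα (by linarith : α < σ) hσ2 t
  calc _ ≤ _ := hF.norm_logDeriv_le hα hη (s := σ + t * I) (by simpa using hσ)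
    _ ≤ 6 / η * (108 * K / η * (1 + t ^ 2)) + 2 * (1 + t ^ 2) := by
        gcongr
        · refine hstrip.trans ?_
          gcongr
          linarith
        · nlinarith [sq_nonneg t]
    _ = _ := by ring

lemma harmonicOnNhd_neg_log_norm_normalize {σ : ℝ} (hασ : α < σ) :
    HarmonicOnNhd (fun s => -Real.log ‖normalize F K s‖) {s | σ ≤ s.re} := fun s hs => by
  have hs' : α < s.re := hασ.trans_le hs
  have hopen : IsOpen {s : ℂ | α < s.re} := isOpen_lt continuous_const continuous_re
  have hdiff : DifferentiableOn ℂ (normalize F K) {s : ℂ | α < s.re} := fun z hz =>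
    (hF.differentiableAt_normalize hα hz).differentiableWithinAt
  exact ((hdiff.analyticAt (hopen.mem_nhds hs')).harmonicAt_log_norm
    (hF.normalize_ne_zero hα hs')).neg

lemma norm_logDeriv_div_one_add_sq_le {η σ : ℝ} (hη : 0 < η) (hσ : α + η ≤ σ) (t : ℝ) :
    ‖logDeriv F (σ + t * I)‖ / (1 + t ^ 2) ≤
      6 / η * (2 * 2 / (2 ^ 2 + t ^ 2) * -Real.log ‖normalize F K (σ + t * I)‖) +
        2 * (1 + t ^ 2)⁻¹ := by
  have hre : α + η ≤ (σ + t * I : ℂ).re := by simpa using hσ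
  have hlog := hF.neg_log_norm_normalize_nonneg (s := σ + t * I) (by linarith)
  have hkernel : (1 + t ^ 2)⁻¹ ≤ 2 * 2 / (2 ^ 2 + t ^ 2) := by
    rw [inv_eq_one_div, div_le_div_iff₀ (by positivity) (by positivity)]
    nlinarith [sq_nonneg t]
  calc _ ≤ (6 / η * -Real.log ‖normalize F K (σ + t * I)‖ + 2) / (1 + t ^ 2) := by
        gcongr
        exact hF.norm_logDeriv_le hα hη hre
    _ = 6 / η * ((1 + t ^ 2)⁻¹ * -Real.log ‖normalize F K (σ + t * I)‖) +
          2 * (1 + t ^ 2)⁻¹ := by ring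
    _ ≤ _ := by gcongr

/-- Averaging over the vertical line costs only `log K`, whereas the pointwise bound for `F' / F`
would also involve `log (1 + |t|)` and a second factor `η⁻¹`. -/
theorem norm_integral_le_of_norm_le_logDeriv (hα1 : α ≤ 1) {η A : ℝ} (hη : 0 < η) (hη1 : η ≤ 1)
    (hA : 0 ≤ A) {g : ℝ → ℂ}
    (hg : ∀ t : ℝ, ‖g t‖ ≤ A / (1 + t ^ 2) * ‖logDeriv F ((α + η : ℝ) + t * I)‖) :
    ‖∫ t, g t‖ ≤ 900 * Real.pi * A * (Real.log K + 1) / η := by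
  set σ : ℝ := α + η
  let v : ℂ → ℝ := fun s => -Real.log ‖normalize F K s‖
  have hασ : α < σ := by simpa [σ] using hη
  have hv_nonneg (s : ℂ) (hs : σ ≤ s.re) : 0 ≤ v s :=
    hF.neg_log_norm_normalize_nonneg (hασ.trans_le hs)
  have hv_harm := hF.harmonicOnNhd_neg_log_norm_normalize hα hασ
  have hpoisson := integral_poisson_mul_le two_pos hv_harm hv_nonneg
  have hint := integrable_poisson_mul two_pos hv_harm hv_nonneg
  have hcentre := hF.neg_log_norm_normalize_add_two_le (hα.trans hασ.le) (by linarith : σ ≤ 2)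
  have hbound (t : ℝ) : ‖g t‖ ≤ A * (6 / η) * (2 * 2 / (2 ^ 2 + t ^ 2) * v (σ + t * I)) +
      A * 2 * (1 + t ^ 2)⁻¹ :=
    calc ‖g t‖ ≤ A * (‖logDeriv F (σ + t * I)‖ / (1 + t ^ 2)) := (hg t).trans_eq (by ring)
      _ ≤ _ := mul_le_mul_of_nonneg_left (hF.norm_logDeriv_div_one_add_sq_le hα hη le_rfl t) hA
      _ = _ := by ring
  calc ‖∫ t, g t‖
      ≤ ∫ t : ℝ, A * (6 / η) * (2 * 2 / (2 ^ 2 + t ^ 2) * v (σ + t * I)) +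
          A * 2 * (1 + t ^ 2)⁻¹ :=
        norm_integral_le_of_norm_le ((hint.const_mul _).add
          (integrable_inv_one_add_sq.const_mul _)) (ae_of_all _ hbound)
    _ = A * (6 / η) * (∫ t : ℝ, 2 * 2 / (2 ^ 2 + t ^ 2) * v (σ + t * I)) + A * 2 * Real.pi := by
        rw [integral_add (hint.const_mul _) (integrable_inv_one_add_sq.const_mul _),
          integral_const_mul, integral_const_mul, integral_univ_inv_one_add_sq]
    _ ≤ A * (6 / η) * (2 * Real.pi * (Real.log K + 74)) + A * 2 * Real.pi := by
        gcongr
        exact hpoisson.trans (by gcongr; exact_mod_cast hcentre)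
    _ = A * Real.pi * (12 * (Real.log K + 74) + 2 * η) / η := by
        field_simp
        ring
    _ ≤ A * Real.pi * (900 * (Real.log K + 1)) / η := by
        have := Real.log_nonneg hF.one_le
        gcongr
        linarith
    _ = _ := by ring

end IsZeroFree

lemma integrable_const_div_one_add_sq (M : ℝ) : Integrable fun t : ℝ => M / (1 + t ^ 2) := by
  simpa only [div_eq_mul_inv] using integrable_inv_one_add_sq.const_mul M

section VerticalShift

variable {f : ℂ → ℂ} {a b M : ℝ}

lemma verticalIntegrable_of_norm_le {σ : ℝ} (hf : ∀ s : ℂ, s.re = σ → ContinuousAt f s)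
    (hM : ∀ t : ℝ, ‖f (σ + t * I)‖ ≤ M / (1 + t ^ 2)) : VerticalIntegrable f σ :=
  (integrable_const_div_one_add_sq M).mono' (Continuous.aestronglyMeasurable
    (continuous_iff_continuousAt.2 fun t => ContinuousAt.comp (f := fun t : ℝ => (σ : ℂ) + t * I)
      (hf _ (by simp)) (by fun_prop))) (ae_of_all _ hM)

lemma tendsto_intervalIntegral_horizontal {y : ℕ → ℝ} (hy : ∀ n, y n ^ 2 = (n : ℝ) ^ 2)
    (hab : a ≤ b) (hM : ∀ σ t : ℝ, a ≤ σ → σ ≤ b → ‖f (σ + t * I)‖ ≤ M / (1 + t ^ 2)) :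
    Tendsto (fun n : ℕ => ∫ x in a..b, f (x + y n * I)) atTop (𝓝 0) := by
  have hbound : Tendsto (fun n : ℕ => M / (1 + (n : ℝ) ^ 2) * |b - a|) atTop (𝓝 0) := by
    have hsq : Tendsto (fun n : ℕ => 1 + (n : ℝ) ^ 2) atTop atTop :=
      tendsto_atTop_add_const_left _ _
        ((tendsto_pow_atTop two_ne_zero).comp tendsto_natCast_atTop_atTop)
    simpa using (hsq.const_div_atTop M).mul_const |b - a|
  refine squeeze_zero_norm (fun n => ?_) hbound
  refine intervalIntegral.norm_integral_le_of_norm_le_const fun x hx => ?_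
  rw [uIoc_of_le hab] at hx
  exact hy n ▸ hM x (y n) hx.1.le hx.2

lemma integral_vertical_eq (hab : a ≤ b)
    (hf : ∀ s : ℂ, a ≤ s.re → s.re ≤ b → DifferentiableAt ℂ f s)
    (hM : ∀ σ t : ℝ, a ≤ σ → σ ≤ b → ‖f (σ + t * I)‖ ≤ M / (1 + t ^ 2)) :
    ∫ t : ℝ, f (a + t * I) = ∫ t : ℝ, f (b + t * I) := by
  have hvert {σ : ℝ} (haσ : a ≤ σ) (hσb : σ ≤ b) :
      Tendsto (fun n : ℕ => ∫ t in (-(n : ℝ))..n, f (σ + t * I)) atTop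
        (𝓝 (∫ t : ℝ, f (σ + t * I))) :=
    intervalIntegral_tendsto_integral (verticalIntegrable_of_norm_le
        (fun s hs => (hf s (hs ▸ haσ) (hs ▸ hσb)).continuousAt) fun t => hM σ t haσ hσb)
      (tendsto_neg_atBot_iff.2 tendsto_natCast_atTop_atTop) tendsto_natCast_atTop_atTop
  have hrect (n : ℕ) : (∫ x in a..b, f (x + (-n : ℝ) * I)) - (∫ x in a..b, f (x + (n : ℝ) * I))
      + I * (∫ t in (-(n : ℝ))..n, f (b + t * I))
      - I * (∫ t in (-(n : ℝ))..n, f (a + t * I)) = 0 := by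
    have := integral_boundary_rect_eq_zero_of_differentiableOn f ⟨a, -n⟩ ⟨b, n⟩ fun s hs => by
      rw [mem_reProdIm, uIcc_of_le hab] at hs
      exact (hf s hs.1.1 hs.1.2).differentiableWithinAt
    simpa only [smul_eq_mul] using this
  have hlim := (((tendsto_intervalIntegral_horizontal (y := fun n => -n) (by simp) hab hM).sub
    (tendsto_intervalIntegral_horizontal (y := fun n => n) (by simp) hab hM)).add
    ((hvert hab le_rfl).const_mul I)).sub ((hvert le_rfl hab).const_mul I)
  simp only [hrect, sub_zero, zero_add, ← mul_sub] at hlim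
  exact (sub_eq_zero.1 ((mul_eq_zero.1 (tendsto_nhds_unique hlim tendsto_const_nhds)).resolve_left
    I_ne_zero)).symm

end VerticalShift

/-- Smooth functions supported in `[a, b]` with `0 < a`, the smoothing weights of the explicit
formula. -/
structure IsWeight (f : ℝ → ℂ) (a b : ℝ) : Prop where
  pos : 0 < a
  le : a ≤ b
  contDiff : ContDiff ℝ (⊤ : ℕ∞) f
  eq_zero : ∀ u ∉ Icc a b, f u = 0

/-- The differential operator `-u d/du`, which the Mellin transform turns into multiplication by
`s`. -/
noncomputable def eulerDeriv (f : ℝ → ℂ) (u : ℝ) : ℂ := -u * deriv f u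

namespace IsWeight

variable {f : ℝ → ℂ} {a b : ℝ} (hf : IsWeight f a b)
include hf

lemma isWeight_eulerDeriv : IsWeight (eulerDeriv f) a b where
  pos := hf.pos
  le := hf.le
  contDiff := ofRealCLM.contDiff.neg.mul (contDiff_infty_iff_deriv.1 hf.contDiff).2
  eq_zero u hu := by
    have hzero : f =ᶠ[𝓝 u] fun _ => 0 := by
      filter_upwards [isClosed_Icc.isOpen_compl.mem_nhds hu] with v hv using hf.eq_zero v hv
    rw [eulerDeriv, hzero.deriv_eq, deriv_const, mul_zero]

lemma isWeight_iterate_eulerDeriv (n : ℕ) : IsWeight (eulerDeriv^[n] f) a b := by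
  induction n with
  | zero => exact hf
  | succ n ih =>
    rw [Function.iterate_succ_apply']
    exact ih.isWeight_eulerDeriv

lemma mellin_eq_intervalIntegral (s : ℂ) :
    mellin f s = ∫ u in (a / 2)..(2 * b), (u : ℂ) ^ (s - 1) * f u := by
  have ha := hf.pos
  have hab := hf.le
  rw [intervalIntegral.integral_of_le (by linarith), mellin]
  refine setIntegral_eq_of_subset_of_forall_sdiff_eq_zero measurableSet_Ioi
    (fun u hu => (half_pos ha).trans hu.1) fun u hu => ?_
  rw [hf.eq_zero u fun h => hu.2 ⟨by linarith [h.1], by linarith [h.2]⟩, smul_zero]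

lemma pos_of_mem_uIcc {u : ℝ} (hu : u ∈ uIcc (a / 2) (2 * b)) : 0 < u := by
  have ha := hf.pos
  have hab := hf.le
  rw [uIcc_of_le (by linarith)] at hu
  linarith [hu.1]

lemma continuousOn_cpow (z : ℂ) :
    ContinuousOn (fun u : ℝ => (u : ℂ) ^ z) (uIcc (a / 2) (2 * b)) := fun _ hu =>
  (continuousAt_ofReal_cpow_const _ z
    (Or.inr (hf.pos_of_mem_uIcc hu).ne')).continuousWithinAt

lemma mul_mellin (s : ℂ) : s * mellin f s = mellin (eulerDeriv f) s := by
  have ha := hf.pos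
  have hab := hf.le
  have hpow (u : ℝ) (hu : u ∈ uIcc (a / 2) (2 * b)) :
      HasDerivAt (fun u : ℝ => (u : ℂ) ^ s) (s * (u : ℂ) ^ (s - 1)) u := by
    simpa using (hasStrictDerivAt_cpow_const
      (ofReal_mem_slitPlane.2 (hf.pos_of_mem_uIcc hu))).hasDerivAt.comp_ofReal
  have hparts := intervalIntegral.integral_mul_deriv_eq_deriv_mul hpow
    (fun u _ => (hf.contDiff.differentiable (by simp) u).hasDerivAt)
    (continuousOn_const.mul (hf.continuousOn_cpow _)).intervalIntegrable
    (hf.contDiff.continuous_deriv (by simp)).continuousOn.intervalIntegrable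
  rw [hf.eq_zero (a / 2) fun h => by linarith [h.1],
    hf.eq_zero (2 * b) fun h => by linarith [h.2], mul_zero, mul_zero, sub_zero, zero_sub,
    ← intervalIntegral.integral_neg] at hparts
  rw [hf.mellin_eq_intervalIntegral, hf.isWeight_eulerDeriv.mellin_eq_intervalIntegral,
    ← intervalIntegral.integral_const_mul]
  simp only [← mul_assoc]
  rw [← neg_inj, ← intervalIntegral.integral_neg, ← hparts, ← intervalIntegral.integral_neg]
  refine intervalIntegral.integral_congr fun u hu => ?_
  have hu0 : (u : ℂ) ≠ 0 := ofReal_ne_zero.2 (hf.pos_of_mem_uIcc hu).ne'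
  simp only [eulerDeriv, cpow_sub _ _ hu0, cpow_one]
  field_simp

lemma pow_mul_mellin (s : ℂ) (n : ℕ) : s ^ n * mellin f s = mellin (eulerDeriv^[n] f) s := by
  induction n with
  | zero => simp
  | succ n ih =>
    rw [pow_succ', mul_assoc, ih, (hf.isWeight_iterate_eulerDeriv n).mul_mellin,
      Function.iterate_succ_apply']

lemma exists_norm_mellin_le (σ₁ σ₂ : ℝ) :
    ∃ C : ℝ, ∀ s : ℂ, σ₁ ≤ s.re → s.re ≤ σ₂ → ‖mellin f s‖ ≤ C := by
  have hcont : ContinuousOn (fun p : ℝ × ℝ => p.2 ^ (p.1 - 1) * ‖f p.2‖)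
      (Icc σ₁ σ₂ ×ˢ uIcc (a / 2) (2 * b)) :=
    (continuousOn_snd.rpow (by fun_prop) fun p hp =>
      Or.inl (hf.pos_of_mem_uIcc hp.2).ne').mul
        (hf.contDiff.continuous.comp continuous_snd).norm.continuousOn
  obtain ⟨B, hB⟩ := (isCompact_Icc.prod isCompact_uIcc).exists_bound_of_continuousOn hcont
  refine ⟨B * |2 * b - a / 2|, fun s h₁ h₂ => ?_⟩
  rw [hf.mellin_eq_intervalIntegral]
  refine intervalIntegral.norm_integral_le_of_norm_le_const fun u hu => ?_
  have hu' := uIoc_subset_uIcc hu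
  rw [norm_mul, norm_cpow_eq_rpow_re_of_pos (hf.pos_of_mem_uIcc hu'), sub_re, one_re]
  exact (Real.le_norm_self _).trans (hB (s.re, u) ⟨⟨h₁, h₂⟩, hu'⟩)

lemma exists_norm_mellin_le_div (σ₁ σ₂ : ℝ) : ∃ C : ℝ, 0 ≤ C ∧ ∀ s : ℂ, σ₁ ≤ s.re → s.re ≤ σ₂ →
    ‖mellin f s‖ ≤ C / (1 + s.im ^ 2) ^ 2 := by
  obtain ⟨A, hA⟩ := hf.exists_norm_mellin_le σ₁ σ₂
  obtain ⟨B, hB⟩ := (hf.isWeight_iterate_eulerDeriv 4).exists_norm_mellin_le σ₁ σ₂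
  refine ⟨2 * (|A| + |B|), by positivity, fun s h₁ h₂ => ?_⟩
  have hA' := (hA s h₁ h₂).trans (le_abs_self A)
  have hB' := (hB s h₁ h₂).trans (le_abs_self B)
  rw [← hf.pow_mul_mellin, norm_mul, norm_pow] at hB'
  have him : s.im ^ 2 ≤ ‖s‖ ^ 2 := sq_le_sq' (by linarith [(abs_le.1 (abs_im_le_norm s)).1])
    ((le_abs_self _).trans (abs_im_le_norm s))
  have hpow : (1 + s.im ^ 2) ^ 2 ≤ 2 * (1 + ‖s‖ ^ 4) := by
    nlinarith [sq_nonneg (s.im ^ 2 - 1), pow_le_pow_left₀ (sq_nonneg _) him 2]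
  rw [le_div_iff₀ (by positivity)]
  nlinarith [mul_le_mul_of_nonneg_left hpow (norm_nonneg (mellin f s))]

lemma isBigO_atTop (r : ℝ) : f =O[atTop] fun u : ℝ => u ^ r := by
  have hzero : f =ᶠ[atTop] 0 := by
    filter_upwards [eventually_gt_atTop b] with u hu using hf.eq_zero u fun h => hu.not_ge h.2
  exact hzero.trans_isBigO (Asymptotics.isBigO_zero _ _)

lemma isBigO_zero (r : ℝ) : f =O[𝓝[>] 0] fun u : ℝ => u ^ r := by
  have hzero : f =ᶠ[𝓝[>] 0] 0 := by
    filter_upwards [nhdsWithin_le_nhds (Iio_mem_nhds hf.pos)] with u hu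
      using hf.eq_zero u fun h => (mem_Iio.1 hu).not_ge h.1
  exact hzero.trans_isBigO (Asymptotics.isBigO_zero _ _)

lemma locallyIntegrableOn : LocallyIntegrableOn f (Ioi 0) :=
  hf.contDiff.continuous.locallyIntegrable.locallyIntegrableOn _

lemma differentiable_mellin : Differentiable ℂ (mellin f) := fun s =>
  mellin_differentiableAt_of_isBigO_rpow hf.locallyIntegrableOn (hf.isBigO_atTop _)
    (lt_add_one s.re) (hf.isBigO_zero _) (sub_one_lt s.re)

lemma verticalIntegrable_mellin (σ : ℝ) : VerticalIntegrable (mellin f) σ := by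
  obtain ⟨C, hC0, hC⟩ := hf.exists_norm_mellin_le_div σ σ
  refine verticalIntegrable_of_norm_le (M := C)
    (fun s _ => hf.differentiable_mellin.continuous.continuousAt) fun t => ?_
  have hre : (σ + t * I : ℂ).re = σ := by simp
  have him : (σ + t * I : ℂ).im = t := by simp
  have h := hC (σ + t * I) hre.ge hre.le
  rw [him] at h
  exact h.trans (div_le_div_of_nonneg_left hC0 (by positivity)
    (le_self_pow₀ (by nlinarith [sq_nonneg t]) two_ne_zero))

lemma mellinInv_mellin (σ : ℝ) {x : ℝ} (hx : 0 < x) : mellinInv σ (mellin f) x = f x :=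
  mellinInv_mellin_eq σ f hx
    (mellinConvergent_of_isBigO_rpow hf.locallyIntegrableOn (hf.isBigO_atTop _)
      (lt_add_one _) (hf.isBigO_zero _) (sub_one_lt _))
    (hf.verticalIntegrable_mellin σ) hf.contDiff.continuous.continuousAt

end IsWeight

section MellinInversion

variable {σ x : ℝ} {F G : ℂ → ℂ}

lemma norm_ofReal_cpow_neg_vertical {u : ℝ} (hu : 0 < u) (σ t : ℝ) :
    ‖(u : ℂ) ^ (-(σ + t * I) : ℂ)‖ = u ^ (-σ) := by
  rw [norm_cpow_eq_rpow_re_of_pos hu]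
  simp

lemma continuous_ofReal_cpow_neg_vertical (hx : 0 < x) :
    Continuous fun t : ℝ => (x : ℂ) ^ (-(σ + t * I) : ℂ) :=
  Continuous.const_cpow (by fun_prop) (Or.inl (ofReal_ne_zero.2 hx.ne'))

lemma integrable_cpow_smul (hF : VerticalIntegrable F σ) (hx : 0 < x) :
    Integrable fun t : ℝ => (x : ℂ) ^ (-(σ + t * I) : ℂ) • F (σ + t * I) :=
  hF.bdd_mul (continuous_ofReal_cpow_neg_vertical hx).aestronglyMeasurable
    (ae_of_all _ fun t => (norm_ofReal_cpow_neg_vertical hx σ t).le)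

lemma mellinInv_sub (hF : VerticalIntegrable F σ) (hG : VerticalIntegrable G σ) (hx : 0 < x) :
    mellinInv σ (fun s => F s - G s) x = mellinInv σ F x - mellinInv σ G x := by
  simp only [mellinInv, smul_sub]
  rw [integral_sub (integrable_cpow_smul hF hx) (integrable_cpow_smul hG hx), smul_sub]

lemma IsWeight.mellinInv_cpow_mul_mellin {f : ℝ → ℂ} {a b : ℝ} (hf : IsWeight f a b) {u : ℝ}
    (hu : 0 < u) (hx : 0 < x) :
    mellinInv σ (fun s => (u : ℂ) ^ (-s) * mellin f s) x = f (u * x) := by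
  rw [← hf.mellinInv_mellin σ (mul_pos hu hx)]
  simp only [mellinInv, smul_eq_mul, ofReal_mul, mul_cpow_ofReal_nonneg hu.le hx.le]
  congr! 3 with t
  ring

end MellinInversion

section DirichletIntegral

variable {Ω : Type*} [MeasurableSpace Ω] {μ : Measure Ω} {c : Ω → ℂ} {p : Ω → ℝ} {σ x : ℝ}

/-- The generalised Dirichlet series `∫ c(ω) p(ω)^(-s) dμ(ω)`. Ordinary Dirichlet series and the
polar term `1 / (s - 1)` are both of this form. -/
noncomputable def dirichletIntegral (μ : Measure Ω) (c : Ω → ℂ) (p : Ω → ℝ) (s : ℂ) : ℂ :=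
  ∫ ω, c ω * (p ω : ℂ) ^ (-s) ∂μ

variable (hcm : Measurable c) (hpm : Measurable p)
  (hp : ∀ᵐ ω ∂μ, c ω ≠ 0 → 0 < p ω) (hc : Integrable (fun ω => ‖c ω‖ * p ω ^ (-σ)) μ)
  {f : ℝ → ℂ} {a b : ℝ} (hf : IsWeight f a b)
include hcm hpm hp hc hf

lemma integrable_prod_dirichletIntegral_mul_mellin : Integrable (Function.uncurry fun (t : ℝ) ω =>
    c ω * (p ω : ℂ) ^ (-(σ + t * I) : ℂ) * mellin f (σ + t * I)) (volume.prod μ) := by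
  refine ((hf.verticalIntegrable_mellin σ).norm.mul_prod hc).mono' ?_ ?_
  · have := hf.differentiable_mellin.continuous.measurable
    exact Measurable.aestronglyMeasurable (by fun_prop)
  · filter_upwards [Measure.quasiMeasurePreserving_snd.ae hp] with z hz
    rw [Function.uncurry, norm_mul, mul_comm, norm_mul]
    rcases eq_or_ne (c z.2) 0 with h0 | h0
    · rw [h0, norm_zero, zero_mul, zero_mul]
    · rw [norm_ofReal_cpow_neg_vertical (hz h0)]

variable [SFinite μ]

lemma verticalIntegrable_dirichletIntegral_mul_mellin :
    VerticalIntegrable (fun s => dirichletIntegral μ c p s * mellin f s) σ := by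
  have h := (integrable_prod_dirichletIntegral_mul_mellin hcm hpm hp hc hf).integral_prod_left
  simp only [Function.uncurry, integral_mul_const] at h
  exact h

lemma mellinInv_dirichletIntegral_mul_mellin (hx : 0 < x) :
    mellinInv σ (fun s => dirichletIntegral μ c p s * mellin f s) x =
      ∫ ω, c ω * f (p ω * x) ∂μ := by
  have hprod : Integrable (Function.uncurry fun (t : ℝ) ω => (x : ℂ) ^ (-(σ + t * I) : ℂ) *
      (c ω * (p ω : ℂ) ^ (-(σ + t * I) : ℂ) * mellin f (σ + t * I))) (volume.prod μ) :=
    (integrable_prod_dirichletIntegral_mul_mellin hcm hpm hp hc hf).bdd_mul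
      ((continuous_ofReal_cpow_neg_vertical hx).measurable.comp measurable_fst).aestronglyMeasurable
      (ae_of_all _ fun z => (norm_ofReal_cpow_neg_vertical hx σ z.1).le)
  calc _ = (1 / (2 * Real.pi)) • ∫ t : ℝ, ∫ ω, (x : ℂ) ^ (-(σ + t * I) : ℂ) *
        (c ω * (p ω : ℂ) ^ (-(σ + t * I) : ℂ) * mellin f (σ + t * I)) ∂μ := by
        simp only [mellinInv, dirichletIntegral, smul_eq_mul, integral_const_mul,
          integral_mul_const]
    _ = ∫ ω, c ω * mellinInv σ (fun s => (p ω : ℂ) ^ (-s) * mellin f s) x ∂μ := by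
        rw [integral_integral_swap hprod, ← integral_smul]
        simp only [mellinInv, smul_eq_mul, mul_smul_comm, ← integral_const_mul]
        congr! 5 with ω
        ring
    _ = ∫ ω, c ω * f (p ω * x) ∂μ := integral_congr_ae <| by
        filter_upwards [hp] with ω hω
        rcases eq_or_ne (c ω) 0 with h0 | h0
        · rw [h0, zero_mul, zero_mul]
        · rw [hf.mellinInv_cpow_mul_mellin (hω h0) hx]

end DirichletIntegral

lemma mellinInv_congr {σ : ℝ} {F G : ℂ → ℂ} (h : ∀ s : ℂ, s.re = σ → F s = G s) :
    mellinInv σ F = mellinInv σ G := by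
  funext x
  simp only [mellinInv]
  congr! 4 with t
  exact h _ (by simp)

lemma ae_count_pos_of_ne_zero {c : ℕ → ℂ} (hc0 : c 0 = 0) :
    ∀ᵐ n ∂(Measure.count : Measure ℕ), c n ≠ 0 → (0 : ℝ) < n :=
  ae_of_all _ fun _ hn => Nat.cast_pos.2 (Nat.pos_of_ne_zero fun h => hn (h ▸ hc0))

lemma integrable_count_norm_mul_rpow {c : ℕ → ℂ} (hc0 : c 0 = 0) {σ : ℝ}
    (hc : LSeriesSummable c σ) :
    Integrable (fun n : ℕ => ‖c n‖ * (n : ℝ) ^ (-σ)) Measure.count := by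
  have hterm : (fun n : ℕ => ‖c n‖ * (n : ℝ) ^ (-σ)) = fun n => ‖LSeries.term c σ n‖ := by
    funext n
    rcases eq_or_ne n 0 with rfl | hn
    · simp [hc0]
    · rw [LSeries.norm_term_eq, if_neg hn, ofReal_re, Real.rpow_neg n.cast_nonneg, div_eq_mul_inv]
  rw [hterm, integrable_count_iff]
  exact hc.norm.norm

lemma dirichletIntegral_count {c : ℕ → ℂ} (hc0 : c 0 = 0) {s : ℂ} (hc : LSeriesSummable c s) :
    dirichletIntegral Measure.count c (↑) s = LSeries c s := by
  have hterm : (fun n : ℕ => c n * ((n : ℝ) : ℂ) ^ (-s)) = LSeries.term c s := by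
    funext n
    rw [LSeries.term_def₀ hc0, ofReal_natCast]
  rw [dirichletIntegral, hterm, integral_countable (integrable_count_iff.2 hc.norm)]
  simp [LSeries]

lemma ae_Ioi_pos : ∀ᵐ u : ℝ ∂volume.restrict (Ioi 1), (1 : ℝ → ℂ) u ≠ 0 → 0 < id u := by
  filter_upwards [ae_restrict_mem measurableSet_Ioi] with u hu _
  exact zero_lt_one.trans hu

lemma integrable_Ioi_rpow {σ : ℝ} (hσ : 1 < σ) :
    Integrable (fun u : ℝ => ‖(1 : ℝ → ℂ) u‖ * id u ^ (-σ)) (volume.restrict (Ioi 1)) := by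
  simp only [Pi.one_apply, norm_one, one_mul, id_eq]
  exact integrableOn_Ioi_rpow_of_lt (neg_lt_neg hσ) zero_lt_one

lemma dirichletIntegral_Ioi {s : ℂ} (hs : 1 < s.re) :
    dirichletIntegral (volume.restrict (Ioi 1)) 1 id s = 1 / (s - 1) := by
  simp only [dirichletIntegral, Pi.one_apply, one_mul, id_eq]
  rw [integral_Ioi_cpow_of_lt (by simpa using hs) zero_lt_one, ofReal_one, one_cpow,
    ← neg_div_neg_eq, neg_neg, neg_add, neg_neg, ← sub_eq_add_neg]

namespace IsWeight

variable {f : ℝ → ℂ} {a b : ℝ} (hf : IsWeight f a b) {σ x : ℝ}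
include hf

lemma summable_mul_comp_mul (c : ℕ → ℂ) (hx : 0 < x) :
    Summable fun n : ℕ => c n * f (n * x) := by
  refine summable_of_hasFiniteSupport ((finite_Iic ⌊b / x⌋₊).subset fun n hn => ?_)
  by_contra hn'
  refine hn (mul_eq_zero_of_right _ (hf.eq_zero _ fun h => hn' (Nat.le_floor ?_)))
  exact (le_div_iff₀ hx).2 h.2

section LSeries

variable {c : ℕ → ℂ} (hc0 : c 0 = 0) (hc : LSeriesSummable c σ)
include hc0 hc

lemma verticalIntegrable_LSeries_mul_mellin :
    VerticalIntegrable (fun s => LSeries c s * mellin f s) σ := by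
  have h := verticalIntegrable_dirichletIntegral_mul_mellin measurable_from_nat measurable_from_nat
    (ae_count_pos_of_ne_zero hc0) (integrable_count_norm_mul_rpow hc0 hc) hf
  refine h.congr (ae_of_all _ fun t => ?_)
  beta_reduce
  rw [dirichletIntegral_count hc0 (hc.of_re_le_re (by simp))]

lemma mellinInv_LSeries_mul_mellin (hx : 0 < x) :
    mellinInv σ (fun s => LSeries c s * mellin f s) x = ∑' n : ℕ, c n * f (n * x) := by
  rw [mellinInv_congr (G := fun s => dirichletIntegral Measure.count c (↑) s * mellin f s)
    fun s hs => by rw [dirichletIntegral_count hc0 (hc.of_re_le_re (by simp [hs]))],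
    mellinInv_dirichletIntegral_mul_mellin measurable_from_nat measurable_from_nat
      (ae_count_pos_of_ne_zero hc0) (integrable_count_norm_mul_rpow hc0 hc) hf hx,
    integral_countable (integrable_count_iff.2 (hf.summable_mul_comp_mul c hx).norm)]
  simp

end LSeries

section Polar

variable (hσ : 1 < σ)
include hσ

lemma verticalIntegrable_one_div_sub_one_mul_mellin :
    VerticalIntegrable (fun s => 1 / (s - 1) * mellin f s) σ := by
  have h := verticalIntegrable_dirichletIntegral_mul_mellin measurable_one measurable_id
    ae_Ioi_pos (integrable_Ioi_rpow hσ) hf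
  refine h.congr (ae_of_all _ fun t => ?_)
  beta_reduce
  rw [dirichletIntegral_Ioi (by simpa using hσ)]

lemma mellinInv_one_div_sub_one_mul_mellin (hx : 0 < x) (hxa : x < a) :
    mellinInv σ (fun s => 1 / (s - 1) * mellin f s) x = (x : ℂ)⁻¹ * ∫ u, f u := by
  rw [mellinInv_congr (G := fun s => dirichletIntegral (volume.restrict (Ioi 1)) 1 id s *
      mellin f s) fun s hs => by rw [dirichletIntegral_Ioi (hσ.trans_eq hs.symm)],
    mellinInv_dirichletIntegral_mul_mellin measurable_one measurable_id ae_Ioi_pos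
      (integrable_Ioi_rpow hσ) hf hx]
  calc _ = ∫ u in Ioi 1, f (u * x) := by simp only [Pi.one_apply, one_mul, id_eq]
    _ = ∫ u, f (u * x) := setIntegral_eq_integral_of_forall_compl_eq_zero fun u hu =>
        hf.eq_zero _ fun h => by
          have hu1 : u ≤ 1 := not_lt.1 hu
          nlinarith [h.1]
    _ = _ := by
        rw [Measure.integral_comp_mul_right, abs_of_pos (inv_pos.2 hx), real_smul, ofReal_inv]

end Polar

section LogDeriv

variable {F : ℂ → ℂ} {α K η : ℝ}

lemma mellinInv_logDeriv_mul_mellin_eq (hF : IsZeroFree F α K) (hα : 0 ≤ α) (hη : 0 < η)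
    (hη2 : α + η ≤ 2) (hx : 0 < x) (hx1 : x ≤ 1) :
    mellinInv (α + η) (fun s => logDeriv F s * mellin f s) x =
      mellinInv 2 (fun s => logDeriv F s * mellin f s) x := by
  obtain ⟨C, -, hC⟩ := hf.exists_norm_mellin_le_div (α + η) 2
  simp only [mellinInv]
  congr 1
  refine integral_vertical_eq (f := fun s => (x : ℂ) ^ (-s) • (logDeriv F s * mellin f s))
    (M := x ^ (-2 : ℝ) * ((648 * K / η ^ 2 + 2) * C)) hη2 (fun s hs _ => ?_) fun σ t hσ hσ2 => ?_
  · exact (differentiableAt_fun_id.neg.const_cpow (Or.inl (ofReal_ne_zero.2 hx.ne'))).mul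
      ((hF.differentiableAt_logDeriv (by linarith)).mul (hf.differentiable_mellin s))
  · have hlog := hF.norm_logDeriv_strip_le hα hη hσ hσ2 t
    have hmellin : ‖mellin f (σ + t * I)‖ ≤ C / (1 + t ^ 2) ^ 2 := by
      simpa using hC (σ + t * I) (by simpa using hσ) (by simpa using hσ2)
    rw [norm_smul, norm_mul, norm_ofReal_cpow_neg_vertical hx]
    calc _ ≤ x ^ (-2 : ℝ) * ((648 * K / η ^ 2 + 2) * (1 + t ^ 2) * (C / (1 + t ^ 2) ^ 2)) :=
          mul_le_mul (Real.rpow_le_rpow_of_exponent_ge hx hx1 (neg_le_neg hσ2))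
            (mul_le_mul hlog hmellin (norm_nonneg _) ((norm_nonneg _).trans hlog))
            (by positivity) (by positivity)
      _ = _ := by field_simp

lemma exists_norm_mellinInv_logDeriv_le (hα : 0 ≤ α) (hα1 : α ≤ 1) :
    ∃ C : ℝ, 0 ≤ C ∧ ∀ (F : ℂ → ℂ) (K x η : ℝ), IsZeroFree F α K → 0 < x → x ≤ 1 →
      0 < η → η ≤ 1 → ‖mellinInv 2 (fun s => logDeriv F s * mellin f s) x‖ ≤
        C * x ^ (-(α + η)) * (Real.log K + 1) / η := by
  obtain ⟨C, hC0, hC⟩ := hf.exists_norm_mellin_le_div 0 2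
  refine ⟨450 * C, by positivity, fun F K x η hF hx hx1 hη hη1 => ?_⟩
  have hmellin (t : ℝ) : ‖mellin f ((α + η : ℝ) + t * I)‖ ≤ C / (1 + t ^ 2) := by
    have h := hC ((α + η : ℝ) + t * I) (by simp; linarith) (by simp; linarith)
    simp only [add_im, ofReal_im, mul_im, ofReal_re, I_im, mul_one, I_re, mul_zero, add_zero,
      zero_add] at h
    exact h.trans (div_le_div_of_nonneg_left hC0 (by positivity)
      (le_self_pow₀ (by nlinarith [sq_nonneg t]) two_ne_zero))
  rw [← hf.mellinInv_logDeriv_mul_mellin_eq hF hα hη (by linarith) hx hx1, mellinInv, norm_smul,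
    Real.norm_of_nonneg (by positivity)]
  have hbound := hF.norm_integral_le_of_norm_le_logDeriv hα hα1 hη hη1
    (A := x ^ (-(α + η)) * C) (g := fun t : ℝ => (x : ℂ) ^ (-((α + η : ℝ) + t * I) : ℂ) •
      (logDeriv F ((α + η : ℝ) + t * I) * mellin f ((α + η : ℝ) + t * I))) (by positivity)
    fun t => by
      rw [norm_smul, norm_mul, norm_ofReal_cpow_neg_vertical hx, mul_div_assoc, mul_assoc,
        mul_comm ‖logDeriv F _‖]
      gcongr
      exact hmellin t
  calc _ ≤ 1 / (2 * Real.pi) * (900 * Real.pi * (x ^ (-(α + η)) * C) * (Real.log K + 1) / η) := by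
        gcongr
    _ = _ := by
        field_simp
        ring

end LogDeriv

end IsWeight

section SumError

/-- The error, on `t > 1`, in approximating the summatory function of `f` at `t` by `c * t`. -/
noncomputable def sumError (f : ℕ → ℂ) (c : ℂ) : ℝ → ℂ :=
  (Ioi (1 : ℝ)).indicator fun t => (∑ k ∈ Finset.Icc 1 ⌊t⌋₊, f k) - c * t

variable {f : ℕ → ℂ} {c : ℂ} {B : ℝ}

lemma measurable_sumError : Measurable (sumError f c) := by
  refine Measurable.indicator (Measurable.sub ?_ (by fun_prop)) measurableSet_Ioi
  exact (measurable_from_nat (f := fun n => ∑ k ∈ Finset.Icc 1 n, f k)).comp Nat.measurable_floor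

lemma sumError_isBigO_zero (b : ℝ) : sumError f c =O[𝓝[>] 0] fun t : ℝ => t ^ b := by
  refine Asymptotics.IsBigO.of_bound 1 ?_
  filter_upwards [nhdsWithin_le_nhds (Iio_mem_nhds (zero_lt_one (α := ℝ)))] with t ht
  rw [sumError, indicator_of_notMem (notMem_Ioi.2 (le_of_lt ht)), norm_zero]
  positivity

lemma mellin_sumError (s : ℂ) : mellin (sumError f c) s =
    ∫ t in Ioi (1 : ℝ), (t : ℂ) ^ (s - 1) * ((∑ k ∈ Finset.Icc 1 ⌊t⌋₊, f k) - c * t) := by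
  calc _ = ∫ t in Ioi (1 : ℝ), (t : ℂ) ^ (s - 1) • sumError f c t :=
        setIntegral_eq_of_subset_of_forall_sdiff_eq_zero measurableSet_Ioi
          (Ioi_subset_Ioi zero_le_one) fun t ht => by
            rw [sumError, indicator_of_notMem ht.2, smul_zero]
    _ = _ := setIntegral_congr_fun measurableSet_Ioi fun t ht => by
        simp only [sumError, indicator_of_mem ht, smul_eq_mul]

variable (hB : ∀ t : ℝ, ‖sumError f c t‖ ≤ B)
include hB

lemma locallyIntegrableOn_sumError : LocallyIntegrableOn (sumError f c) (Ioi 0) :=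
  ((locallyIntegrable_const B).mono measurable_sumError.aestronglyMeasurable
    (ae_of_all _ fun t => (hB t).trans (le_abs_self B))).locallyIntegrableOn _

lemma sumError_isBigO_atTop : sumError f c =O[atTop] fun t : ℝ => t ^ (-0 : ℝ) :=
  Asymptotics.IsBigO.of_bound B (Eventually.of_forall fun t => by simpa using hB t)

lemma differentiableAt_mellin_sumError {s : ℂ} (hs : s.re < 0) :
    DifferentiableAt ℂ (mellin (sumError f c)) s :=
  mellin_differentiableAt_of_isBigO_rpow (locallyIntegrableOn_sumError hB)
    (sumError_isBigO_atTop hB) hs (sumError_isBigO_zero _) (sub_one_lt s.re)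

lemma integrableOn_cpow_mul_sumError {s : ℂ} (hs : s.re < 0) : IntegrableOn (fun t : ℝ =>
    (t : ℂ) ^ (s - 1) * ((∑ k ∈ Finset.Icc 1 ⌊t⌋₊, f k) - c * t)) (Ioi 1) := by
  have h := mellinConvergent_of_isBigO_rpow (locallyIntegrableOn_sumError hB)
    (sumError_isBigO_atTop hB) hs (sumError_isBigO_zero _) (sub_one_lt s.re)
  exact (h.mono_set (Ioi_subset_Ioi zero_le_one)).congr_fun (fun t ht => by
    simp only [sumError, indicator_of_mem ht, smul_eq_mul]) measurableSet_Ioi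

lemma norm_sum_sub_le {t : ℝ} (ht : 1 < t) :
    ‖(∑ k ∈ Finset.Icc 1 ⌊t⌋₊, f k) - c * t‖ ≤ B := by
  have h := hB t
  rwa [sumError, indicator_of_mem (mem_Ioi.2 ht)] at h

lemma norm_mellin_sumError_le {s : ℂ} (hs : s.re < 0) :
    ‖mellin (sumError f c) s‖ ≤ B / -s.re := by
  have hint : IntegrableOn (fun t : ℝ => B * t ^ (s.re - 1)) (Ioi 1) :=
    (integrableOn_Ioi_rpow_of_lt (by linarith) zero_lt_one).const_mul B
  rw [mellin_sumError]
  calc _ ≤ ∫ t in Ioi (1 : ℝ), B * t ^ (s.re - 1) := by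
        refine norm_integral_le_of_norm_le hint ?_
        filter_upwards [ae_restrict_mem measurableSet_Ioi] with t ht
        have ht0 : 0 < t := zero_lt_one.trans ht
        rw [norm_mul, norm_cpow_eq_rpow_re_of_pos ht0, mul_comm, sub_re, one_re]
        gcongr
        exact norm_sum_sub_le hB ht
    _ = B / -s.re := by
        rw [integral_const_mul, integral_Ioi_rpow_of_lt (by linarith) zero_lt_one, Real.one_rpow,
          sub_add_cancel, neg_div, ← div_neg, mul_one_div]

lemma sum_isBigO : (fun n : ℕ => ∑ k ∈ Finset.Icc 1 n, f k) =O[atTop]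
    fun n : ℕ => (n : ℝ) ^ (1 : ℝ) := by
  refine Asymptotics.IsBigO.of_bound (B + ‖c‖) ?_
  filter_upwards [eventually_gt_atTop 1] with n hn
  have hn1 : (1 : ℝ) < n := Nat.one_lt_cast.2 hn
  have herr := norm_sum_sub_le hB hn1
  rw [Nat.floor_natCast] at herr
  have hB0 : 0 ≤ B := (norm_nonneg _).trans herr
  rw [Real.rpow_one, Real.norm_of_nonneg (by positivity)]
  calc _ ≤ _ := norm_le_norm_sub_add _ (c * n)
    _ ≤ B * n + ‖c‖ * n := by
        rw [norm_mul, norm_natCast]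
        gcongr
        exact herr.trans (le_mul_of_one_le_right hB0 hn1.le)
    _ = _ := by ring

lemma LSeries_eq_mellin_sumError {s : ℂ} (hs : 1 < s.re) (hf : LSeriesSummable f s) :
    LSeries f s = c * s / (s - 1) + s * mellin (sumError f c) (-s) := by
  have hs1 : s - 1 ≠ 0 := sub_ne_zero.2 fun h => by simp [h] at hs
  have herr := integrableOn_cpow_mul_sumError hB (s := -s) (by simp; linarith)
  have hmain : IntegrableOn (fun t : ℝ => c * (t : ℂ) ^ (-s)) (Ioi 1) :=
    (integrableOn_Ioi_cpow_of_lt (by simpa using hs) zero_lt_one).const_mul c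
  have hsum : ∫ t in Ioi (1 : ℝ), (∑ k ∈ Finset.Icc 1 ⌊t⌋₊, f k) * (t : ℂ) ^ (-(s + 1)) =
      mellin (sumError f c) (-s) + ∫ t in Ioi (1 : ℝ), c * (t : ℂ) ^ (-s) := by
    rw [mellin_sumError, ← integral_add herr hmain]
    refine setIntegral_congr_fun measurableSet_Ioi fun t ht => ?_
    have ht0 : (t : ℂ) ≠ 0 := ofReal_ne_zero.2 (zero_lt_one.trans ht).ne'
    have hpow : (t : ℂ) ^ (-s) = (t : ℂ) ^ (-s - 1) * t := by
      rw [cpow_sub _ _ ht0, cpow_one, div_mul_cancel₀ _ ht0]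
    simp only [hpow, neg_add']
    ring
  rw [LSeries_eq_mul_integral f zero_le_one hs hf (sum_isBigO hB), hsum, integral_const_mul,
    integral_Ioi_cpow_of_lt (by simpa using hs) zero_lt_one, ofReal_one, one_cpow,
    neg_div, ← div_neg, neg_add, neg_neg, ← sub_eq_add_neg]
  ring

end SumError

section Periodic

open scoped BigOperators

variable {N : ℕ} [NeZero N]

lemma sum_range_natCast (Φ : ZMod N → ℂ) : ∑ k ∈ Finset.range N, Φ k = ∑ a, Φ a :=
  Finset.sum_nbij' (fun k => (k : ZMod N)) ZMod.val (by simp)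
    (fun a _ => Finset.mem_range.2 (ZMod.val_lt a))
    (fun _ hk => ZMod.val_cast_of_lt (Finset.mem_range.1 hk)) (by simp) (by simp)

variable {Φ : ZMod N → ℂ} (hΦ : ∀ a, ‖Φ a‖ ≤ 1)
include hΦ

lemma norm_expect_le_one : ‖𝔼 a, Φ a‖ ≤ 1 :=
  (RCLike.norm_expect_le (K := ℂ)).trans
    (Finset.expect_le Finset.univ_nonempty fun a _ => hΦ a)

lemma norm_sum_range_sub_le (n : ℕ) :
    ‖∑ k ∈ Finset.range n, Φ k - (𝔼 a, Φ a) * n‖ ≤ 2 * N := by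
  induction n using Nat.strong_induction_on with
  | _ n ih =>
  rcases lt_or_ge n N with h | h
  · have hsum : ‖∑ k ∈ Finset.range n, Φ k‖ ≤ n := by
      simpa using norm_sum_le_of_le (Finset.range n) fun k _ => hΦ k
    have hmean : ‖(𝔼 a, Φ a) * n‖ ≤ n := by
      rw [norm_mul, norm_natCast]
      exact mul_le_of_le_one_left n.cast_nonneg (norm_expect_le_one hΦ)
    have hnN : (n : ℝ) ≤ N := Nat.cast_le.2 h.le
    linarith [norm_sub_le (∑ k ∈ Finset.range n, Φ k) ((𝔼 a, Φ a) * n)]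
  · obtain ⟨m, rfl⟩ := Nat.exists_eq_add_of_le h
    have hperiod : ∑ k ∈ Finset.range N, Φ k = (𝔼 a, Φ a) * N := by
      rw [sum_range_natCast, ← Fintype.card_mul_expect, ZMod.card, mul_comm]
    have hm := ih m (by have := NeZero.pos N; lia)
    simpa only [Finset.sum_range_add, hperiod, Nat.cast_add, CharP.cast_eq_zero, zero_add, mul_add,
      add_sub_add_left_eq_sub] using hm

lemma norm_sumError_le (t : ℝ) : ‖sumError (fun n => Φ n) (𝔼 a, Φ a) t‖ ≤ 3 * N := by
  rw [sumError, indicator]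
  split_ifs with ht
  · have ht0 : 0 ≤ t := zero_le_one.trans (le_of_lt ht)
    have hshift : ∑ k ∈ Finset.Icc 1 ⌊t⌋₊, Φ k =
        ∑ k ∈ Finset.range ⌊t⌋₊, (fun a => Φ (a + 1)) (k : ZMod N) := by
      simp only [← Nat.cast_add_one]
      rw [Finset.range_eq_Ico, Finset.sum_Ico_add' (fun k : ℕ => Φ k) 0 _ 1]
      rfl
    have hmean : 𝔼 a, Φ (a + 1) = 𝔼 a, Φ a :=
      Fintype.expect_equiv (Equiv.addRight 1) _ _ fun _ => rfl
    have hsum := norm_sum_range_sub_le (fun a => hΦ (a + 1)) ⌊t⌋₊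
    rw [hmean, ← hshift] at hsum
    have hfloor : ‖(𝔼 a, Φ a) * ((⌊t⌋₊ : ℂ) - t)‖ ≤ 1 := by
      rw [norm_mul, ← ofReal_natCast, ← ofReal_sub, norm_real]
      refine mul_le_one₀ (norm_expect_le_one hΦ) (norm_nonneg _) (abs_le.2 ⟨?_, ?_⟩)
      · linarith [Nat.lt_floor_add_one t]
      · linarith [Nat.floor_le ht0]
    have hN : (1 : ℝ) ≤ N := Nat.one_le_cast.2 (NeZero.pos N)
    calc _ = ‖(∑ k ∈ Finset.Icc 1 ⌊t⌋₊, Φ k - (𝔼 a, Φ a) * ⌊t⌋₊) +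
          (𝔼 a, Φ a) * ((⌊t⌋₊ : ℂ) - t)‖ := by ring_nf
      _ ≤ 2 * N + 1 := norm_add_le_of_le hsum hfloor
      _ ≤ _ := by linarith
  · rw [norm_zero]
    positivity

end Periodic

lemma eq_of_eq_of_one_lt_re {F G : ℂ → ℂ} (hF : ∀ s : ℂ, 0 < s.re → DifferentiableAt ℂ F s)
    (hG : ∀ s : ℂ, 0 < s.re → DifferentiableAt ℂ G s) (h : ∀ s : ℂ, 1 < s.re → F s = G s)
    {s : ℂ} (hs : 0 < s.re) : F s = G s := by
  have hopen (α : ℝ) : IsOpen {s : ℂ | α < s.re} := isOpen_lt continuous_const continuous_re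
  have hanalytic {H : ℂ → ℂ} (hH : ∀ s : ℂ, 0 < s.re → DifferentiableAt ℂ H s) :
      AnalyticOnNhd ℂ H {s : ℂ | 0 < s.re} :=
    DifferentiableOn.analyticOnNhd (fun s hs => (hH s hs).differentiableWithinAt) (hopen 0)
  refine (hanalytic hF).eqOn_of_preconnected_of_eventuallyEq (hanalytic hG)
    (convex_halfSpace_re_gt 0).isPreconnected (z₀ := 2) (by simp) ?_ hs
  filter_upwards [(hopen 1).mem_nhds (by simp : (2 : ℂ) ∈ {s : ℂ | 1 < s.re})] using h

lemma norm_le_norm_of_abs_re_le {z w : ℂ} (hre : |z.re| ≤ |w.re|) (him : z.im = w.im) :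
    ‖z‖ ≤ ‖w‖ := by
  rw [norm_eq_sqrt_sq_add_sq, norm_eq_sqrt_sq_add_sq, him]
  exact Real.sqrt_le_sqrt (add_le_add_left (sq_le_sq.2 hre) _)

lemma norm_le_norm_add_one {s : ℂ} (hs : 0 ≤ s.re) : ‖s‖ ≤ ‖s + 1‖ :=
  norm_le_norm_of_abs_re_le (abs_le_abs_of_nonneg hs (by simp)) (by simp)

lemma norm_sub_one_le_norm_add_one {s : ℂ} (hs : 0 ≤ s.re) : ‖s - 1‖ ≤ ‖s + 1‖ :=
  norm_le_norm_of_abs_re_le (abs_le_abs (by simp; linarith) (by simp; linarith)) (by simp)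

section RegularLFunction

open scoped BigOperators ArithmeticFunction.vonMangoldt

/-- No `L`-function of a Dirichlet character modulo `N` vanishes on `α < re s < 1`. -/
def LFunctionsZeroFree (N : ℕ) [NeZero N] (α : ℝ) : Prop :=
  ∀ (χ : DirichletCharacter ℂ N) (s : ℂ), α < s.re → s.re < 1 → χ.LFunction s ≠ 0

variable {N : ℕ} [NeZero N]

/-- The entire function `(s - 1) L(χ, s)` if `χ` is principal, and `L(χ, s)` otherwise. -/
noncomputable def regularLFunction (χ : DirichletCharacter ℂ N) : ℂ → ℂ :=
  if χ = 1 then DirichletCharacter.LFunctionTrivChar₁ N else χ.LFunction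

variable (χ : DirichletCharacter ℂ N) {s : ℂ}

lemma differentiable_regularLFunction : Differentiable ℂ (regularLFunction χ) := by
  unfold regularLFunction
  split_ifs with h
  · exact DirichletCharacter.differentiable_LFunctionTrivChar₁ N
  · exact DirichletCharacter.differentiable_LFunction h

lemma regularLFunction_apply (hs : s ≠ 1) :
    regularLFunction χ s = (if χ = 1 then s - 1 else 1) * χ.LFunction s := by
  unfold regularLFunction
  split_ifs with h
  · rw [DirichletCharacter.LFunctionTrivChar₁, Function.update_of_ne hs, h]
  · rw [one_mul]

lemma regularLFunction_ne_zero {α : ℝ} (hzero : LFunctionsZeroFree N α) (hs : α < s.re) :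
    regularLFunction χ s ≠ 0 := by
  by_cases hs1 : χ ≠ 1 ∨ s ≠ 1
  · have hL : χ.LFunction s ≠ 0 := (lt_or_ge s.re 1).elim (hzero χ s hs)
      (χ.LFunction_ne_zero_of_one_le_re hs1)
    by_cases hχ : χ = 1
    · have hs1 := hs1.resolve_left (not_not.2 hχ)
      rw [regularLFunction_apply χ hs1, if_pos hχ]
      exact mul_ne_zero (sub_ne_zero.2 hs1) hL
    · rwa [regularLFunction, if_neg hχ]
  · obtain ⟨hχ, rfl⟩ : χ = 1 ∧ s = 1 := by simpa using hs1
    rw [regularLFunction, if_pos hχ]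
    exact DirichletCharacter.LFunctionTrivChar₁_apply_one_ne_zero N

lemma regularLFunction_eq_mellin (hs : 0 < s.re) : regularLFunction χ s = (𝔼 a, χ a) * s +
    (if χ = 1 then s - 1 else 1) * (s * mellin (sumError (fun n => χ n) (𝔼 a, χ a)) (-s)) := by
  have hB := norm_sumError_le χ.norm_le_one
  refine eq_of_eq_of_one_lt_re (G := fun s => (𝔼 a, χ a) * s +
    (if χ = 1 then s - 1 else 1) * (s * mellin (sumError (fun n => χ n) (𝔼 a, χ a)) (-s)))
    (fun s _ => differentiable_regularLFunction χ s) (fun s hs => ?_) (fun s hs => ?_) hs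
  · have hM : DifferentiableAt ℂ (fun s => mellin (sumError (fun n => χ n) (𝔼 a, χ a)) (-s)) s :=
      (differentiableAt_mellin_sumError hB (by simpa using hs)).comp s differentiableAt_fun_id.neg
    split_ifs <;> fun_prop
  · have hs1 : s - 1 ≠ 0 := sub_ne_zero.2 fun h => by simp [h] at hs
    rw [regularLFunction_apply χ (sub_ne_zero.1 hs1), χ.LFunction_eq_LSeries hs,
      LSeries_eq_mellin_sumError hB hs (χ.LSeriesSummable_of_one_lt_re hs)]
    split_ifs with h
    · field_simp
    · rw [Fintype.expect_eq_sum_div_card, MulChar.sum_eq_zero_of_ne_one h]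
      ring

lemma norm_regularLFunction_le (hs : 1 / 2 < s.re) :
    ‖regularLFunction χ s‖ ≤ 7 * N * ‖s + 1‖ ^ 2 := by
  have hN : (1 : ℝ) ≤ N := Nat.one_le_cast.2 (NeZero.pos N)
  have hre : 0 ≤ s.re := by linarith
  have hs1 := one_le_norm_add_one hre
  have hmellin : ‖mellin (sumError (fun n => χ n) (𝔼 a, χ a)) (-s)‖ ≤ 6 * N := by
    have h := norm_mellin_sumError_le (norm_sumError_le χ.norm_le_one) (s := -s)
      (by simp; linarith)
    rw [neg_re, neg_neg] at h
    exact h.trans (div_le_of_le_mul₀ hre (by positivity) (by nlinarith))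
  have hfactor : ‖if χ = 1 then s - 1 else 1‖ ≤ ‖s + 1‖ := by
    split_ifs
    · exact norm_sub_one_le_norm_add_one hre
    · rwa [norm_one]
  rw [regularLFunction_eq_mellin χ (by linarith)]
  refine (norm_add_le _ _).trans ?_
  rw [norm_mul, norm_mul, norm_mul]
  calc _ ≤ 1 * ‖s + 1‖ + ‖s + 1‖ * (‖s + 1‖ * (6 * N)) := by
        gcongr
        · exact norm_expect_le_one χ.norm_le_one
        · exact norm_le_norm_add_one hre
        · exact norm_le_norm_add_one hre
    _ ≤ _ := by nlinarith

lemma tsum_one_div_add_two_sq_le : ∑' n : ℕ, 1 / ((n + 2 : ℕ) : ℝ) ^ 2 ≤ 2 / 3 := by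
  have h := hasSum_zeta_two.summable.sum_add_tsum_nat_add 2
  simp only [hasSum_zeta_two.tsum_eq, Finset.sum_range_succ, Finset.range_zero, Finset.sum_empty,
    Nat.cast_zero, ne_eq, OfNat.ofNat_ne_zero, not_false_eq_true, zero_pow, div_zero, zero_add,
    Nat.cast_one, one_pow, div_one] at h
  nlinarith [Real.pi_lt_d2, Real.pi_pos]

lemma one_third_le_norm_LFunction (hs : 2 ≤ s.re) : 1 / 3 ≤ ‖χ.LFunction s‖ := by
  have hs1 : 1 < s.re := by linarith
  have hsum : LSeriesSummable (fun n : ℕ => χ n) s := χ.LSeriesSummable_of_one_lt_re hs1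
  have hL : χ.LFunction s = 1 + ∑' n, LSeries.term (fun n : ℕ => χ n) s (n + 2) := by
    rw [χ.LFunction_eq_LSeries hs1, LSeries, ← hsum.sum_add_tsum_nat_add 2]
    simp [Finset.sum_range_succ]
  have htail : ‖∑' n, LSeries.term (fun n : ℕ => χ n) s (n + 2)‖ ≤
      ∑' n : ℕ, 1 / ((n + 2 : ℕ) : ℝ) ^ 2 := by
    refine tsum_of_norm_bounded ((summable_nat_add_iff 2).2 hasSum_zeta_two.summable).hasSum
      fun n => ?_
    have hn : (1 : ℝ) ≤ (n + 2 : ℕ) := Nat.one_le_cast.2 (by lia)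
    rw [LSeries.norm_term_eq, if_neg (by lia), ← Real.rpow_ofNat]
    gcongr
    exact χ.norm_le_one _
  have htriangle := norm_sub_le_norm_add (1 : ℂ)
    (∑' n, LSeries.term (fun n : ℕ => χ n) s (n + 2))
  rw [norm_one, ← hL] at htriangle
  linarith [tsum_one_div_add_two_sq_le]

lemma one_third_le_norm_regularLFunction (hs : 2 ≤ s.re) : 1 / 3 ≤ ‖regularLFunction χ s‖ := by
  have hs1 : s ≠ 1 := fun h => by norm_num [h] at hs
  have hfactor : 1 ≤ ‖if χ = 1 then s - 1 else 1‖ := by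
    split_ifs
    · exact le_trans (by simp; linarith) (re_le_norm (s - 1))
    · rw [norm_one]
  rw [regularLFunction_apply χ hs1, norm_mul]
  exact (one_third_le_norm_LFunction χ hs).trans (le_mul_of_one_le_left (norm_nonneg _) hfactor)

lemma isZeroFree_regularLFunction {α : ℝ} (hα : 1 / 2 ≤ α) (hzero : LFunctionsZeroFree N α) :
    IsZeroFree (regularLFunction χ) α (7 * N) where
  one_le := by
    have hN : (1 : ℝ) ≤ N := Nat.one_le_cast.2 (NeZero.pos N)
    linarith
  differentiableAt s _ := differentiable_regularLFunction χ s
  ne_zero _ hs := regularLFunction_ne_zero χ hzero hs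
  norm_le _ hs := norm_regularLFunction_le χ (hα.trans_lt hs)
  le_norm _ hs := one_third_le_norm_regularLFunction χ hs

lemma logDeriv_regularLFunction (hs : 1 < s.re) : logDeriv (regularLFunction χ) s =
    (if χ = 1 then 1 / (s - 1) else 0) - LSeries ((fun n : ℕ => χ n) * fun n => (Λ n : ℂ)) s := by
  have hs1 : s ≠ 1 := fun h => by simp [h] at hs
  have hlog : logDeriv χ.LFunction s = -LSeries ((fun n : ℕ => χ n) * fun n => (Λ n : ℂ)) s := by
    rw [DirichletCharacter.LSeries_twist_vonMangoldt_eq χ hs, logDeriv_apply,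
      χ.LFunction_eq_LSeries hs, χ.deriv_LFunction_eq_deriv_LSeries hs]
    ring
  rw [sub_eq_add_neg, ← hlog]
  have hne : χ.LFunction s ≠ 0 := χ.LFunction_ne_zero_of_one_le_re (Or.inr hs1) hs.le
  split_ifs with h
  · have hev : regularLFunction χ =ᶠ[𝓝 s] fun s => (s - 1) * χ.LFunction s := by
      filter_upwards [isOpen_ne.mem_nhds hs1] with w hw
      rw [regularLFunction_apply χ hw, if_pos h]
    rw [(logDeriv_congr_nhds hev).eq_of_nhds, logDeriv_mul (f := (· - 1)) s (sub_ne_zero.2 hs1) hne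
      (by fun_prop) (χ.differentiableAt_LFunction s (Or.inl hs1)), logDeriv_apply (· - 1)]
    simp
  · rw [regularLFunction, if_neg h, zero_add]

end RegularLFunction

section SmoothPsi

open scoped ArithmeticFunction.vonMangoldt
open ArithmeticFunction.vonMangoldt (residueClass residueClass_apply residueClass_le
  residueClass_nonneg)

variable {N : ℕ}

lemma one_le_log {x : ℝ} (hx : 3 ≤ x) : 1 ≤ Real.log x :=
  (Real.le_log_iff_exp_le (by linarith)).2 (Real.exp_one_lt_three.le.trans hx)

lemma log_seven_mul_add_one_le [NeZero N] {x : ℝ} (hx : 7 ≤ x) (hNx : N ≤ x) :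
    Real.log (7 * N) + 1 ≤ 3 * Real.log x := by
  have hx0 : 0 < x := by linarith
  have h : Real.log (7 * N) ≤ Real.log x + Real.log x := by
    rw [← Real.log_mul hx0.ne' hx0.ne']
    exact Real.log_le_log (by simp [NeZero.pos]) (by gcongr)
  linarith [one_le_log (by linarith : 3 ≤ x)]

/-- The Chebyshev function `∑ χ(n) Λ(n) f(n / x)` of a Dirichlet character, smoothed by the
weight `f`. -/
noncomputable def smoothPsi (χ : DirichletCharacter ℂ N) (f : ℝ → ℂ) (x : ℝ) : ℂ :=
  ∑' n : ℕ, χ n * Λ n * f (n / x)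

namespace IsWeight

variable {f : ℝ → ℂ} {a b : ℝ} (hf : IsWeight f a b) {α x : ℝ}
include hf

lemma mellinInv_logDeriv_regularLFunction [NeZero N] (χ : DirichletCharacter ℂ N)
    (hxa : a⁻¹ < x) : mellinInv 2 (fun s => logDeriv (regularLFunction χ) s * mellin f s) x⁻¹ =
      (if χ = 1 then x * ∫ u, f u else 0) - smoothPsi χ f x := by
  have hx : 0 < x := (inv_pos.2 hf.pos).trans hxa
  set c : ℕ → ℂ := (fun n : ℕ => χ n) * fun n => (Λ n : ℂ)
  have hc0 : c 0 = 0 := by simp [c]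
  have hc : LSeriesSummable c (2 : ℝ) := χ.LSeriesSummable_twist_vonMangoldt (by simp)
  have hpsi : mellinInv 2 (fun s => LSeries c s * mellin f s) x⁻¹ = smoothPsi χ f x :=
    hf.mellinInv_LSeries_mul_mellin hc0 hc (inv_pos.2 hx)
  have hpolar : mellinInv 2 (fun s => (if χ = 1 then 1 / (s - 1) else 0) * mellin f s) x⁻¹ =
      if χ = 1 then x * ∫ u, f u else 0 := by
    split_ifs
    · rw [hf.mellinInv_one_div_sub_one_mul_mellin one_lt_two (inv_pos.2 hx)
        (inv_lt_of_inv_lt₀ hf.pos hxa), ofReal_inv, inv_inv]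
    · simp [mellinInv]
  have hpolar_int : VerticalIntegrable
      (fun s => (if χ = 1 then 1 / (s - 1) else 0) * mellin f s) 2 := by
    split_ifs
    · exact hf.verticalIntegrable_one_div_sub_one_mul_mellin one_lt_two
    · simp [VerticalIntegrable]
  rw [← hpsi, ← hpolar, ← mellinInv_sub hpolar_int
    (hf.verticalIntegrable_LSeries_mul_mellin hc0 hc) (inv_pos.2 hx)]
  refine congrFun (mellinInv_congr fun s hs => ?_) _
  rw [logDeriv_regularLFunction χ (hs ▸ one_lt_two), sub_mul]

lemma exists_norm_smoothPsi_sub_le (hα : 1 / 2 ≤ α) (hα1 : α ≤ 1) :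
    ∃ C : ℝ, 0 ≤ C ∧ ∀ (N : ℕ) [NeZero N] (χ : DirichletCharacter ℂ N) (x : ℝ),
      LFunctionsZeroFree N α → 3 ≤ x → a⁻¹ < x →
      ‖smoothPsi χ f x - if χ = 1 then x * ∫ u, f u else 0‖ ≤
        C * x ^ α * Real.log x * (Real.log (7 * N) + 1) := by
  obtain ⟨C, hC0, hC⟩ := hf.exists_norm_mellinInv_logDeriv_le (by linarith) hα1
  refine ⟨C * Real.exp 1, by positivity, fun N _ χ x hzero hx hxa => ?_⟩
  have hx0 : 0 < x := by linarith
  have hlog := one_le_log hx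
  have hpow : x⁻¹ ^ (-(α + (Real.log x)⁻¹)) = x ^ α * Real.exp 1 := by
    rw [Real.inv_rpow hx0.le, Real.rpow_neg hx0.le, inv_inv, Real.rpow_add hx0,
      Real.rpow_inv_log hx0 (by linarith)]
  have h := hC _ _ x⁻¹ (Real.log x)⁻¹ (isZeroFree_regularLFunction χ hα hzero) (inv_pos.2 hx0)
    (inv_le_one_of_one_le₀ (by linarith)) (by positivity) (inv_le_one_of_one_le₀ hlog)
  rw [hf.mellinInv_logDeriv_regularLFunction χ hxa, hpow, div_inv_eq_mul] at h
  rw [norm_sub_rev]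
  exact h.trans_eq (by ring)

lemma totient_mul_tsum_residueClass [NeZero N] {r : ZMod N} (hr : IsUnit r) (hx : 0 < x) :
    N.totient * ∑' n : ℕ, residueClass r n * f (n / x) =
      ∑ χ : DirichletCharacter ℂ N, χ r⁻¹ * smoothPsi χ f x := by
  have hsum (χ : DirichletCharacter ℂ N) :
      Summable fun n : ℕ => χ r⁻¹ * (χ n * Λ n * f (n / x)) :=
    (hf.summable_mul_comp_mul _ (inv_pos.2 hx)).mul_left _
  have htotient : (N.totient : ℂ) ≠ 0 := Nat.cast_ne_zero.2 (NeZero.pos N.totient).ne'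
  simp only [smoothPsi, ← tsum_mul_left]
  rw [← Summable.tsum_finsetSum fun χ _ => hsum χ]
  refine tsum_congr fun n => ?_
  rw [residueClass_apply hr, ← mul_assoc, mul_inv_cancel_left₀ htotient, Finset.sum_mul]
  exact Finset.sum_congr rfl fun χ _ => by ring

lemma exists_norm_tsum_residueClass_sub_le (hα : 1 / 2 ≤ α) (hα1 : α ≤ 1) :
    ∃ C : ℝ, 0 ≤ C ∧ ∀ (N : ℕ) [NeZero N] (r : ZMod N) (x : ℝ), IsUnit r →
      LFunctionsZeroFree N α → 3 ≤ x → a⁻¹ < x →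
      ‖N.totient * ∑' n : ℕ, residueClass r n * f (n / x) - x * ∫ u, f u‖ ≤
        N.totient * (C * x ^ α * Real.log x * (Real.log (7 * N) + 1)) := by
  obtain ⟨C, hC0, hC⟩ := hf.exists_norm_smoothPsi_sub_le hα hα1
  refine ⟨C, hC0, fun N _ r x hr hzero hx hxa => ?_⟩
  have hmain : x * ∫ u, f u = ∑ χ : DirichletCharacter ℂ N,
      χ r⁻¹ * if χ = 1 then x * ∫ u, f u else 0 := by
    have hinv : IsUnit r⁻¹ := by
      obtain ⟨u, rfl⟩ := hr
      exact ZMod.inv_coe_unit u ▸ u⁻¹.isUnit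
    simp [MulChar.one_apply hinv]
  rw [hf.totient_mul_tsum_residueClass hr (by linarith), hmain, ← Finset.sum_sub_distrib]
  simp only [← mul_sub]
  refine (norm_sum_le_of_le _ (n := fun _ => C * x ^ α * Real.log x * (Real.log (7 * N) + 1))
    fun χ _ => ?_).trans_eq ?_
  · rw [norm_mul]
    exact (mul_le_of_le_one_left (norm_nonneg _) (χ.norm_le_one _)).trans (hC N χ x hzero hx hxa)
  · rw [Finset.sum_const, nsmul_eq_mul, Finset.card_univ, ← Nat.card_eq_fintype_card,
      DirichletCharacter.card_eq_totient_of_hasEnoughRootsOfUnity]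

end IsWeight

section ForallNotPrime

variable {f : ℝ → ℂ} {a : ℝ} (hf : IsWeight f a 1) (hf1 : ∀ u, ‖f u‖ ≤ 1)
include hf hf1

lemma IsWeight.norm_tsum_residueClass_le {r : ZMod N} {x : ℝ} (hx : 0 < x)
    (hprime : ∀ p : ℕ, p.Prime → (p : ZMod N) = r → a * x ≤ p → x < p) :
    ‖∑' n : ℕ, residueClass r n * f (n / x)‖ ≤ Chebyshev.psi x - Chebyshev.theta x := by
  have hzero (n : ℕ) (hn : n / x ∉ Icc a 1) : (residueClass r n : ℂ) * f (n / x) = 0 := by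
    rw [hf.eq_zero _ hn, mul_zero]
  rw [tsum_eq_sum (s := Finset.Ioc 0 ⌊x⌋₊), Chebyshev.psi_sub_theta_eq_sum_not_prime,
    Finset.sum_filter]
  · refine norm_sum_le_of_le _ fun n hn => ?_
    split_ifs with hp
    · by_cases hr : (n : ZMod N) = r
      · rw [hzero n fun h => (hprime n hp hr ((le_div_iff₀ hx).1 h.1)).not_ge
          ((Nat.le_floor_iff hx.le).1 (Finset.mem_Ioc.1 hn).2), norm_zero]
      · simp [residueClass, hr]
    · rw [norm_mul, norm_real, Real.norm_of_nonneg (residueClass_nonneg r n)]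
      exact (mul_le_of_le_one_right (residueClass_nonneg r n) (hf1 _)).trans (residueClass_le r n)
  · refine fun n hn => hzero n fun h => hn (Finset.mem_Ioc.2 ⟨?_, ?_⟩)
    · exact Nat.pos_of_ne_zero fun h0 => by simpa [h0, hf.pos.not_ge] using h.1
    · exact Nat.le_floor ((div_le_one₀ hx).1 h.2)

lemma IsWeight.exists_norm_integral_mul_le {α : ℝ} (hα : 1 / 2 ≤ α) (hα1 : α ≤ 1) :
    ∃ C : ℝ, 0 < C ∧ ∀ (N : ℕ) [NeZero N] (r : ZMod N) (x : ℝ), IsUnit r →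
      LFunctionsZeroFree N α → 7 ≤ x → a⁻¹ < x → N ≤ x →
      (∀ p : ℕ, p.Prime → (p : ZMod N) = r → a * x ≤ p → x < p) →
      x * ‖∫ u, f u‖ ≤ C * N * x ^ α * Real.log x ^ 2 := by
  obtain ⟨C, hC0, hC⟩ := hf.exists_norm_tsum_residueClass_sub_le hα hα1
  obtain ⟨B, hB⟩ := Chebyshev.psi_sub_theta_le_mul_sqrt
  refine ⟨|B| + 3 * C + 1, by positivity, fun N _ r x hr hzero hx hxa hNx hprime => ?_⟩
  have hx0 : 0 < x := by linarith
  have hlog : 1 ≤ Real.log x := one_le_log (by linarith)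
  have hsqrt : √x ≤ x ^ α * Real.log x ^ 2 := by
    rw [Real.sqrt_eq_rpow]
    exact (Real.rpow_le_rpow_of_exponent_le (by linarith) hα).trans
      (le_mul_of_one_le_right (by positivity) (one_le_pow₀ hlog))
  have hsum : ‖∑' n : ℕ, residueClass r n * f (n / x)‖ ≤ |B| * (x ^ α * Real.log x ^ 2) :=
    calc _ ≤ B * √x := (hf.norm_tsum_residueClass_le hf1 hx0 hprime).trans (hB x)
      _ ≤ _ := by
        gcongr
        exact le_abs_self B
  have herror : C * x ^ α * Real.log x * (Real.log (7 * N) + 1) ≤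
      3 * C * (x ^ α * Real.log x ^ 2) :=
    calc _ ≤ C * x ^ α * Real.log x * (3 * Real.log x) := by
          gcongr
          exact log_seven_mul_add_one_le hx hNx
      _ = _ := by ring
  calc x * ‖∫ u, f u‖ = ‖(x * ∫ u, f u : ℂ)‖ := by
        rw [norm_mul, norm_real, Real.norm_of_nonneg hx0.le]
    _ ≤ ‖(N.totient * ∑' n : ℕ, residueClass r n * f (n / x) : ℂ)‖ +
        N.totient * (3 * C * (x ^ α * Real.log x ^ 2)) := by
        have h := (hC N r x hr hzero (by linarith) hxa).trans
          (mul_le_mul_of_nonneg_left herror N.totient.cast_nonneg)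
        linarith [norm_le_norm_add_norm_sub
          (N.totient * ∑' n : ℕ, residueClass r n * f (n / x) : ℂ) (x * ∫ u, f u : ℂ)]
    _ ≤ N.totient * ((|B| + 3 * C) * (x ^ α * Real.log x ^ 2)) := by
        rw [norm_mul, norm_natCast, ← mul_add, add_mul]
        gcongr
    _ ≤ N * ((|B| + 3 * C + 1) * (x ^ α * Real.log x ^ 2)) := by
        gcongr ?_ * (?_ * _)
        · exact Nat.cast_le.2 N.totient_le
        · exact le_add_of_nonneg_right zero_le_one
    _ = _ := by ring

end ForallNotPrime

lemma exists_isWeight {a b : ℝ} (ha : 0 < a) (hab : a < b) :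
    ∃ f : ℝ → ℂ, IsWeight f a b ∧ (∀ u, ‖f u‖ ≤ 1) ∧ 0 < ‖∫ u, f u‖ := by
  let g : ContDiffBump ((a + b) / 2) :=
    ⟨(b - a) / 4, (b - a) / 2, by linarith, by linarith⟩
  refine ⟨fun u => g u, ⟨ha, hab.le, ofRealCLM.contDiff.comp g.contDiff, fun u hu => ?_⟩,
    fun u => ?_, ?_⟩
  · rw [g.zero_of_le_dist, ofReal_zero]
    contrapose! hu
    obtain ⟨h1, h2⟩ := abs_lt.1 hu
    simp only [g] at h1 h2
    constructor <;> linarith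
  · rw [norm_real, Real.norm_of_nonneg g.nonneg]
    exact g.le_one
  · rw [integral_complex_ofReal, norm_real, Real.norm_of_nonneg g.integral_pos.le]
    exact g.integral_pos

end SmoothPsi

end DirichletBertrand

open DirichletBertrand in
theorem dirichlet_bertrand_of_ERH_general {α δ : ℝ} (hα : 1 / 2 ≤ α) (hα1 : α ≤ 1) (hδ : 0 < δ)
    (hδ1 : δ < 1) (D a : ℕ → ℕ) [∀ n, NeZero (D n)] (hzero : ∀ n, LFunctionsZeroFree (D n) α)
    (hcop : ∀ n, Nat.Coprime (a n) (D n))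
    (hlim : Filter.Tendsto (fun n : ℕ => (D n : ℝ) * (Real.log n) ^ 2 / (n : ℝ) ^ (1 - α))
      Filter.atTop (nhds 0)) :
    ∀ᶠ n : ℕ in Filter.atTop, ∃ p : ℕ, p.Prime ∧ p % D n = a n % D n ∧ δ * n ≤ p ∧ p ≤ n := by
  obtain ⟨f, hf, hf1, hI⟩ := exists_isWeight hδ hδ1
  obtain ⟨C, hC0, hC⟩ := hf.exists_norm_integral_mul_le hf1 hα hα1
  filter_upwards [hlim.eventually_lt_const (div_pos hI hC0),
    hlim.eventually_lt_const zero_lt_one, Filter.eventually_ge_atTop 7,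
    tendsto_natCast_atTop_atTop.eventually_gt_atTop δ⁻¹] with n hsmall hlt_one hn hnδ
  have hn7 : (7 : ℝ) ≤ n := by exact_mod_cast hn
  have hn0 : (0 : ℝ) < n := by linarith
  have hlog : 1 ≤ Real.log n := one_le_log (by linarith)
  have hpow : (n : ℝ) ^ α * (n : ℝ) ^ (1 - α) = n := by
    rw [← Real.rpow_add hn0, add_sub_cancel, Real.rpow_one]
  have hDn : (D n : ℝ) ≤ n :=
    calc (D n : ℝ) ≤ D n * Real.log n ^ 2 :=
          le_mul_of_one_le_right (Nat.cast_nonneg _) (one_le_pow₀ hlog)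
      _ ≤ n ^ (1 - α) := ((div_lt_one (by positivity)).1 hlt_one).le
      _ ≤ n := Real.rpow_le_self_of_one_le (by linarith) (by linarith)
  by_contra! hno
  have hle := hC (D n) (a n) n ((ZMod.isUnit_iff_coprime _ _).2 (hcop n)) (hzero n) hn7 hnδ hDn
    fun p hp hpa hpn => by exact_mod_cast hno p hp ((ZMod.natCast_eq_natCast_iff _ _ _).1 hpa) hpn
  rw [div_lt_div_iff₀ (by positivity) hC0] at hsmall
  have := mul_lt_mul_of_pos_left hsmall (Real.rpow_pos_of_pos hn0 α)
  nlinarith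

/-- Bertrand's postulate for Dirichlet primes under ERH: if `D_n (log n)^2 / √n → 0`
and `gcd(a_n, D_n) = 1`, then for all sufficiently large `n` there is a prime
`p ≡ a_n (mod D_n)` with `n/2 ≤ p ≤ n`. -/
theorem dirichlet_bertrand_of_ERH (erh : ExtendedRiemannHypothesis)
    (D a : ℕ → ℕ) (hD : ∀ n, 1 ≤ D n) (hcop : ∀ n, Nat.Coprime (a n) (D n))
    (hlim : Filter.Tendsto (fun n : ℕ => (D n : ℝ) * (Real.log n) ^ 2 / Real.sqrt n)
      Filter.atTop (nhds 0)) :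
    ∀ᶠ n : ℕ in Filter.atTop, ∃ p : ℕ, p.Prime ∧ p % D n = a n % D n ∧
      (n : ℝ) / 2 ≤ (p : ℝ) ∧ p ≤ n := by
  have (n : ℕ) : NeZero (D n) := ⟨Nat.one_le_iff_ne_zero.1 (hD n)⟩
  have h := dirichlet_bertrand_of_ERH_general le_rfl one_half_lt_one.le one_half_pos
    one_half_lt_one D a (fun n χ s hs hs1 h0 => hs.ne' (erh (D n) χ s (by linarith) hs1 h0)) hcop
    (by simpa only [sub_half, Real.sqrt_eq_rpow] using hlim)
  simpa only [one_div_mul_eq_div] using h
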